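/- Let M be a countable totally categorical structure, presented in a regular adequate language with quantifier elimination, with 0-definable modular strictly minimal set D. Then the family C of all finite D-envelopes is cofinal in the class K of all finite substructures of M, has the joint embedding property and has the amalgamation property; consequently M is the generic structure for K with C as the corresponding family of amalgamation bases. -/

import Mathlib

open FirstOrder FirstOrder.Language CategoryTheory Set

universe u v

namespace Paper


variable {L : FirstOrder.Language.{u, v}}

/-- `A` is an amalgamation base for the class `K`: any two extensions of `A` in `K`
have a common extension in `K` amalgamating the embeddings over `A`. -/
def IsAmalgamationBase (K : Set (Bundled.{0} L.Structure)) (A : Bundled.{0} L.Structure) : Prop :=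
  A ∈ K ∧ ∀ (B C : Bundled.{0} L.Structure) (f : A ↪[L] B) (g : A ↪[L] C),
    B ∈ K → C ∈ K → ∃ (D : Bundled.{0} L.Structure) (f' : B ↪[L] D) (g' : C ↪[L] D),
      D ∈ K ∧ f'.comp f = g'.comp g

/-- Truss' condition: every element of `K` extends to an amalgamation base. -/
def TrussCondition (K : Set (Bundled.{0} L.Structure)) : Prop :=
  ∀ A ∈ K, ∃ B : Bundled.{0} L.Structure, IsAmalgamationBase K B ∧ Nonempty (A ↪[L] B)

/-- `C` is a cofinal subclass of `K`. -/
def IsCofinalIn (C K : Set (Bundled.{0} L.Structure)) : Prop :=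
  C ⊆ K ∧ ∀ A ∈ K, ∃ B ∈ C, Nonempty (A ↪[L] B)

/-- The weak amalgamation property. -/
def WeakAmalgamation (K : Set (Bundled.{0} L.Structure)) : Prop :=
  ∀ A ∈ K, ∃ (A' : Bundled.{0} L.Structure) (i : A ↪[L] A'), A' ∈ K ∧
    ∀ (B₁ B₂ : Bundled.{0} L.Structure) (f₁ : A' ↪[L] B₁) (f₂ : A' ↪[L] B₂),
      B₁ ∈ K → B₂ ∈ K →
      ∃ (D : Bundled.{0} L.Structure) (g₁ : B₁ ↪[L] D) (g₂ : B₂ ↪[L] D),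
        D ∈ K ∧ (g₁.comp f₁).comp i = (g₂.comp f₂).comp i

/-- The set of copies of `A` inside a structure `C`: substructures of `C` isomorphic to `A`. -/
def copies (A : Bundled.{0} L.Structure) (C : Type) [L.Structure C] :
    Set (L.Substructure C) :=
  {S | Nonempty (A ≃[L] S)}

/-- The Ramsey property for a class of finite structures, phrased with copies:
for every `k` and every pair `A ≤ B` in the class there is `C₀` in the class such that
every `k`-coloring of the copies of `A` in `C₀` is monochromatic on the copies of `A`
lying inside some copy of `B` in `C₀`. -/
def RamseyProperty (C : Set (Bundled.{0} L.Structure)) : Prop :=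
  ∀ (k : ℕ), ∀ A ∈ C, ∀ B ∈ C, Nonempty (A ↪[L] B) →
    ∃ C₀ ∈ C, ∀ ξ : L.Substructure C₀ → Fin (k + 1),
      ∃ B' ∈ copies B C₀, ∀ S₁ ∈ copies A C₀, ∀ S₂ ∈ copies A C₀,
        S₁ ≤ B' → S₂ ≤ B' → ξ S₁ = ξ S₂

/-- `k` is a bound for the embedding Ramsey degree of `A` in the class `K`. -/
def EmbRamseyDegBound (K : Set (Bundled.{0} L.Structure)) (A : Bundled.{0} L.Structure)
    (k : ℕ) : Prop :=
  ∀ (r : ℕ), ∀ B ∈ K, Nonempty (A ↪[L] B) →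
    ∃ C ∈ K, ∀ ξ : (A ↪[L] C) → Fin (r + 1),
      ∃ h : B ↪[L] C, (Set.range fun e : A ↪[L] B => ξ (h.comp e)).ncard ≤ k

/-- The embedding Ramsey degree of `A` in `K`, as an extended natural number
(`⊤` if no finite bound exists). -/
noncomputable def embRamseyDegree (K : Set (Bundled.{0} L.Structure))
    (A : Bundled.{0} L.Structure) : ℕ∞ :=
  sInf {n : ℕ∞ | ∃ k : ℕ, n = k ∧ EmbRamseyDegBound K A k}

/-- `k` is a bound for the (copy) Ramsey degree of `A` in the class `K`. -/
def RamseyDegBound (K : Set (Bundled.{0} L.Structure)) (A : Bundled.{0} L.Structure)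
    (k : ℕ) : Prop :=
  ∀ (r : ℕ), ∀ B ∈ K, Nonempty (A ↪[L] B) →
    ∃ C ∈ K, ∀ ξ : L.Substructure C → Fin (r + 1),
      ∃ B' ∈ copies B (C : Type), (ξ '' {S | S ∈ copies A (C : Type) ∧ S ≤ B'}).ncard ≤ k

/-- `A` has finite (copy) Ramsey degree in `K`. -/
def HasFinRamseyDeg (K : Set (Bundled.{0} L.Structure)) (A : Bundled.{0} L.Structure) : Prop :=
  ∃ k : ℕ, RamseyDegBound K A k

variable {L : FirstOrder.Language.{u, v}}

/-- The space of candidate `L`-structures on `ω`, for a relational language: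
a point records, for each relation symbol, which tuples satisfy it.  It carries
the product topology (with `Bool` discrete), which is the standard logic topology. -/
abbrev StructureSpace (L : FirstOrder.Language.{u, v}) : Type v :=
  ∀ n : ℕ, L.Relations n → (Fin n → ℕ) → Bool

/-- The `L`-structure on `ℕ` coded by a point of the structure space. -/
def pointStructure [L.IsRelational] (x : StructureSpace L) : L.Structure ℕ where
  funMap := fun f _ => isEmptyElim f
  RelMap := fun {n} R t => x n R t = true

/-- The point of the structure space coding a given `L`-structure on `ℕ`. -/
noncomputable def ofStructure (N : L.Structure ℕ) : StructureSpace L :=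
  fun n R t => @decide (@Structure.RelMap L ℕ N n R t) (Classical.propDecidable _)

/-- The logic action of `S∞ = Perm ℕ` on the space of structures. -/
def permSMul (g : Equiv.Perm ℕ) (x : StructureSpace L) : StructureSpace L :=
  fun n R t => x n R fun i => g.symm (t i)

@[simp] theorem permSMul_one (x : StructureSpace L) : permSMul 1 x = x := rfl

theorem permSMul_mul (g h : Equiv.Perm ℕ) (x : StructureSpace L) :
    permSMul (g * h) x = permSMul g (permSMul h x) := rfl

/-- The automorphism group of (the structure coded by) `x`, as a subgroup of `S∞`. -/
def autGroup (x : StructureSpace L) : Subgroup (Equiv.Perm ℕ) where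
  carrier := {g | permSMul g x = x}
  one_mem' := permSMul_one x
  mul_mem' := by
    intro a b ha hb
    show permSMul (a * b) x = x
    rw [permSMul_mul, hb, ha]
  inv_mem' := by
    intro a ha
    show permSMul a⁻¹ x = x
    conv_lhs => rw [← ha]
    rw [← permSMul_mul, inv_mul_cancel, permSMul_one]

/-- The topology of pointwise convergence on `S∞` (and hence, by restriction, on
automorphism groups of structures with universe `ℕ`). -/
instance : TopologicalSpace (Equiv.Perm ℕ) :=
  TopologicalSpace.induced
    (fun g => ((g : ℕ → ℕ), ((g⁻¹ : Equiv.Perm ℕ) : ℕ → ℕ))) inferInstance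

/-- The age of the structure coded by a point of the structure space. -/
def agePoint [L.IsRelational] (x : StructureSpace L) : Set (Bundled.{0} L.Structure) :=
  @FirstOrder.Language.age L ℕ (pointStructure x)

/-- The subspace of the structure space consisting of structures whose age is contained
in `K`. -/
def spaceOf [L.IsRelational] (K : Set (Bundled.{0} L.Structure)) : Set (StructureSpace L) :=
  {x | agePoint x ⊆ K}

/-- `x` is a generic point for `K` : it lies in the space of structures with age `⊆ K`,
and its `S∞`-orbit is comeagre there. -/
def IsGenericPoint [L.IsRelational] (K : Set (Bundled.{0} L.Structure))
    (x : StructureSpace L) : Prop :=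
  x ∈ spaceOf K ∧
    {y : ↥(spaceOf K) | ∃ g : Equiv.Perm ℕ, (y : StructureSpace L) = permSMul g x} ∈
      residual ↥(spaceOf K)

/-- A topological group is extremely amenable if every continuous action on a nonempty
compact Hausdorff space has a fixed point. -/
def ExtremelyAmenable (G : Type*) [Group G] [TopologicalSpace G] : Prop :=
  ∀ (X : Type) [TopologicalSpace X] [CompactSpace X] [T2Space X] [Nonempty X]
    [MulAction G X], ContinuousSMul G X → ∃ x : X, ∀ g : G, g • x = x

/-- A topological group is amenable if every continuous action on a nonempty compact
Hausdorff space supports an invariant Borel probability measure. -/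
def AmenableGroup (G : Type*) [Group G] [TopologicalSpace G] : Prop :=
  ∀ (X : Type) [TopologicalSpace X] [CompactSpace X] [T2Space X] [Nonempty X]
    [MulAction G X], ContinuousSMul G X →
    letI : MeasurableSpace X := borel X
    ∃ μ : MeasureTheory.Measure X, MeasureTheory.IsProbabilityMeasure μ ∧
      ∀ g : G, MeasureTheory.Measure.map (fun p => g • p) μ = μ

/-- Uniform local finiteness: substructures generated by `n` elements have size
bounded by a function of `n`. -/
def IsULF (L : FirstOrder.Language.{u, v}) (N : Type*) [L.Structure N] : Prop :=
  ∃ f : ℕ → ℕ, ∀ s : Finset N, Nat.card (Substructure.closure L (s : Set N)) ≤ f s.card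

/-- `K` is (the universal class given by) the age of a countable uniformly locally
finite structure. -/
def IsAgeOfCountableULF (K : Set (Bundled.{0} L.Structure)) : Prop :=
  ∃ N : Bundled.{0} L.Structure, Countable N ∧ IsULF L N ∧ K = L.age N

variable {L : FirstOrder.Language.{u, v}}


/-- `M` is ω-categorical : its complete theory has, up to isomorphism, a unique
countable model. -/
def OmegaCategorical (L : FirstOrder.Language.{0, 0}) (M : Type) [L.Structure M] : Prop :=
  Cardinal.Categorical Cardinal.aleph0.{0} (L.completeTheory M)

/-- `M` is totally categorical : its complete theory is categorical in every infinite
cardinality. -/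
def TotallyCategorical (L : FirstOrder.Language.{0, 0}) (M : Type) [L.Structure M] : Prop :=
  ∀ κ : Cardinal.{0}, Cardinal.aleph0 ≤ κ → Cardinal.Categorical.{0,0,0} κ (L.completeTheory M)

/-- A formula in one free variable with parameter tuple, coded syntactically. -/
abbrev ParamFormula (L : FirstOrder.Language.{0, 0}) : Type :=
  Σ k : ℕ, L.Formula (Fin k ⊕ Fin 1) × (Fin k → ℕ)

/-- Realization of a parametrized formula at a point, in the structure `M` on `ℕ`. -/
def ParamFormula.RealizeAt (L : FirstOrder.Language.{0, 0}) (M : L.Structure ℕ)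
    (q : ParamFormula L) (b : ℕ) : Prop :=
  @Formula.Realize L ℕ M _ q.2.1 (Sum.elim q.2.2 fun _ => b)

/-- `p` is a complete 1-type over the parameter set `A` of the structure `M` on `ℕ` :
all parameters come from `A`, `p` is finitely satisfiable in `M` and complete. -/
def IsCompleteTypeOver (L : FirstOrder.Language.{0, 0}) (M : L.Structure ℕ) (A : Set ℕ)
    (p : Set (ParamFormula L)) : Prop :=
  (∀ q ∈ p, ∀ i, q.2.2 i ∈ A) ∧
    (∀ s : Finset (ParamFormula L), ↑s ⊆ p →
      ∃ b : ℕ, ∀ q ∈ s, ParamFormula.RealizeAt L M q b) ∧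
    ∀ (k : ℕ) (φ : L.Formula (Fin k ⊕ Fin 1)) (a : Fin k → ℕ), (∀ i, a i ∈ A) →
      (⟨k, (φ, a)⟩ : ParamFormula L) ∈ p ∨ (⟨k, (φ.not, a)⟩ : ParamFormula L) ∈ p

/-- `M` is ω-stable : over every countable parameter set there are only countably many
complete 1-types. -/
def OmegaStable (L : FirstOrder.Language.{0, 0}) (M : L.Structure ℕ) : Prop :=
  ∀ A : Set ℕ, A.Countable → {p | IsCompleteTypeOver L M A p}.Countable

/-- The structure on `ℕ` in the language expanded by the new relation symbols of `L'`,
obtained by adjoining to `M` the interpretations coded by `e`. -/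
def expStructure (L' : FirstOrder.Language.{0, 0}) [L'.IsRelational]
    (M : L.Structure ℕ) (e : StructureSpace L') : (L.sum L').Structure ℕ where
  funMap := fun {n} f t => Sum.casesOn f (fun f => @Structure.funMap L ℕ M n f t)
    (fun f => isEmptyElim f)
  RelMap := fun {n} R t => Sum.casesOn R (fun R => @Structure.RelMap L ℕ M n R t)
    (fun R => e n R t = true)

/-- The expansion `e` of `M` is precompact : every finite structure in the age of `M`
has only finitely many expansions in the age of the expanded structure. -/
def PrecompactExpansion (L' : FirstOrder.Language.{0, 0}) [L'.IsRelational]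
    (M : L.Structure ℕ) (e : StructureSpace L') : Prop :=
  ∀ A : Bundled.{0} L.Structure, A ∈ @FirstOrder.Language.age L ℕ M → Finite A →
    {S : (L.sum L').Structure A.α |
      @FirstOrder.Language.LHom.reduct L (L.sum L') LHom.sumInl A.α S = A.str ∧
        (Bundled.mk A.α S) ∈
          @FirstOrder.Language.age (L.sum L') ℕ (expStructure L' M e)}.Finite

/-- An (abstract) flow of a topological group `G` on a topological space `X`. -/
structure FlowOn (G : Type*) [Group G] [TopologicalSpace G] (X : Type*)
    [TopologicalSpace X] where
  act : G → X → X
  continuous_act : Continuous fun p : G × X => act p.1 p.2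
  act_one : ∀ x, act 1 x = x
  act_mul : ∀ g h x, act (g * h) x = act g (act h x)

variable {G : Type*} [Group G] [TopologicalSpace G] {X : Type*} [TopologicalSpace X]

/-- A flow is minimal if its phase space is a nonempty compact space in which
every orbit is dense. -/
def FlowOn.IsMinimal (F : FlowOn G X) : Prop :=
  Nonempty X ∧ CompactSpace X ∧ ∀ x : X, Dense (Set.range fun g : G => F.act g x)

/-- A flow is a universal minimal flow if it is minimal and admits a continuous
equivariant map to every nonempty compact flow. -/
def FlowOn.IsUniversalMinimal (F : FlowOn G X) : Prop :=
  F.IsMinimal ∧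
    ∀ (Y : Type) [TopologicalSpace Y] [CompactSpace Y] [Nonempty Y] (F' : FlowOn G Y),
      ∃ f : X → Y, Continuous f ∧ ∀ g y, f (F.act g y) = F'.act g (f y)

/-- The model-theoretic algebraic closure of a set `A` in a structure `W`: elements
satisfying a formula with parameters from `A` having finitely many solutions. -/
def aclSet (L : FirstOrder.Language.{0, 0}) (W : Type) [L.Structure W] (A : Set W) :
    Set W :=
  {b | ∃ (k : ℕ) (φ : L.Formula (Fin k ⊕ Fin 1)) (a : Fin k → W),
    (∀ i, a i ∈ A) ∧ φ.Realize (Sum.elim a fun _ => b) ∧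
      {c | φ.Realize (Sum.elim a fun _ => c)}.Finite}

/-- Quantifier elimination: every formula is equivalent in `W` to a quantifier-free one. -/
def HasQE (L : FirstOrder.Language.{0, 0}) (W : Type) [L.Structure W] : Prop :=
  ∀ (n : ℕ) (φ : L.Formula (Fin n)), ∃ ψ : L.Formula (Fin n),
    ψ.IsQF ∧ ∀ v : Fin n → W, φ.Realize v ↔ ψ.Realize v

/-- A `0`-definable set `D` is strongly minimal if it is infinite and every subset
definable with parameters is finite or cofinite in `D`. -/
def StronglyMinimalSet (L : FirstOrder.Language.{0, 0}) (W : Type) [L.Structure W]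
    (D : Set W) : Prop :=
  D.Infinite ∧ ∀ s : Set W, (Set.univ : Set W).Definable₁ L s →
    (s ∩ D).Finite ∨ (D \ s).Finite

/-- A strictly minimal set: strongly minimal, `0`-definable, with `Aut(W)` acting
transitively on it. -/
def StrictlyMinimalSet (L : FirstOrder.Language.{0, 0}) (W : Type) [L.Structure W]
    (D : Set W) : Prop :=
  (∅ : Set W).Definable₁ L D ∧ StronglyMinimalSet L W D ∧
    ∀ a ∈ D, ∀ b ∈ D, ∃ e : W ≃[L] W, e a = b

/-- `X` is a closed subset of `D` for the pregeometry given by algebraic closure. -/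
def IsAclClosedIn (L : FirstOrder.Language.{0, 0}) (W : Type) [L.Structure W]
    (D X : Set W) : Prop :=
  X ⊆ D ∧ aclSet L W X ∩ D = X

/-- Modularity of the pregeometry on `D` given by algebraic closure, phrased as the
modular law in the lattice of closed subsets of `D`. -/
def ModularGeometryOn (L : FirstOrder.Language.{0, 0}) (W : Type) [L.Structure W]
    (D : Set W) : Prop :=
  ∀ X Y Z : Set W, IsAclClosedIn L W D X → IsAclClosedIn L W D Y →
    IsAclClosedIn L W D Z → X ⊆ Z →
      aclSet L W (X ∪ (Y ∩ Z)) ∩ D = (aclSet L W (X ∪ Y) ∩ D) ∩ Z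

/-- `E` is a `D`-envelope: for some `A ⊆ E`, `E` is maximal subject to `A ⊆ E` and
`acl(E) ∩ D = acl(A) ∩ D`. -/
def IsEnvelope (L : FirstOrder.Language.{0, 0}) (W : Type) [L.Structure W]
    (D E : Set W) : Prop :=
  ∃ A : Set W, A ⊆ E ∧ aclSet L W E ∩ D = aclSet L W A ∩ D ∧
    ∀ E' : Set W, E ⊆ E' → aclSet L W E' ∩ D = aclSet L W A ∩ D → E' = E

/-- The induced structure on a subset of a structure in a relational language. -/
instance subsetStructure (L : FirstOrder.Language.{0, 0}) [L.IsRelational] (W : Type)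
    [L.Structure W] (E : Set W) : L.Structure ↥E where
  funMap := fun f _ => isEmptyElim f
  RelMap := fun R t => Structure.RelMap R fun i => (t i : W)

/-- The class of all finite substructures of `W` (as bundled structures, up to
isomorphism). -/
def finSubClass (L : FirstOrder.Language.{0, 0}) (W : Type) [L.Structure W] :
    Set (Bundled.{0} L.Structure) :=
  {A | Finite A ∧ Nonempty (A ↪[L] W)}

/-- The class of finite `D`-envelopes of `W`, as bundled structures. -/
def envClass (L : FirstOrder.Language.{0, 0}) [L.IsRelational] (W : Type)
    [L.Structure W] (D : Set W) : Set (Bundled.{0} L.Structure) :=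
  {A | ∃ E : Set W, E.Finite ∧ IsEnvelope L W D E ∧ Nonempty (A ≃[L] ↥E)}

/-- Abstract data for the coordinatizing geometries of an ω-stable ω-categorical
structure in a regular adequate eq-presentation: a family of standard systems of
(projective) geometries `Sys`, their equivalence classes `Cls`, domains, fibers, and
the meaning of "`J_b ∩ E` has the isomorphism type given by the value `m`". -/
structure GeomSystem (L : FirstOrder.Language.{0, 0}) (W : Type) [L.Structure W] where
  Cls : Type
  Sys : Type
  cls : Sys → Cls
  dom : Sys → Set W
  fib : Sys → W → Set W
  hasType : Sys → ℕ → Set W → Prop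

/-- `E` is a `μ`-envelope for the dimension function `μ`:
(i) `E` is algebraically closed in `W`;
(ii) for every `c ∉ E` some fiber geometry over `E` grows when `c` is added;
(iii) every fiber geometry over `E` meets `E` in the isomorphism type prescribed
by `μ`. -/
def IsMuEnvelope (L : FirstOrder.Language.{0, 0}) (W : Type) [L.Structure W]
    (G : GeomSystem L W) (μ : G.Cls → ℕ) (E : Set W) : Prop :=
  aclSet L W E = E ∧
    (∀ c ∉ E, ∃ J : G.Sys, ∃ b ∈ G.dom J ∩ E,
      aclSet L W E ∩ G.fib J b ⊂ aclSet L W (E ∪ {c}) ∩ G.fib J b) ∧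
    ∀ J : G.Sys, ∀ b ∈ G.dom J ∩ E, G.hasType J (μ (G.cls J)) (G.fib J b ∩ E)

/-- The class `E_const` of all finite `μ`-envelopes for constant dimension functions. -/
def envConstClass (L : FirstOrder.Language.{0, 0}) [L.IsRelational] (W : Type)
    [L.Structure W] (G : GeomSystem L W) : Set (Bundled.{0} L.Structure) :=
  {A | ∃ E : Set W, E.Finite ∧ (∃ m : ℕ, IsMuEnvelope L W G (fun _ => m) E) ∧
    Nonempty (A ≃[L] ↥E)}

end Paper

/-!
Ehrenfeucht–Mostowski models of size `ℵ₁` realize only countably many types over countable sets, so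
by `ℵ₁`-categoricity all models do, and isolated types are dense. With `ℵ₀`-categoricity this makes
`M` atomic. By quantifier elimination `M` is then ultrahomogeneous, so its age has amalgamation, and
the type of a finite tuple is a clopen condition on the space of structures whose age is contained
in that of `M`; hence the back-and-forth conditions characterizing `M` define a countable
intersection of dense open sets.

Cofinality of the envelopes amounts to the finiteness of every set `E` with `acl(E) ∩ D` finite.
Modularity and the scarcity of types give `acl(E ∪ X) ∩ D ⊆ acl((acl(E) ∩ D) ∪ X)` for finite
`X ⊆ D`. If `E` were infinite, `ℵ₁` indiscernible elements of an ultrapower, each realizing a fixed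
nonprincipal ultrafilter on `E`, would therefore add nothing to `D`, and neither would closing off
to a model by realizing isolated types. In the resulting uncountable model `D` is countable, whereas
`ℵ₁`-categoricity makes `D` uncountable in every uncountable model.
-/

namespace Paper

/-! ### Iterated ultrafilters -/

section IteratedUltrafilter

variable {I J M : Type*}

/-- The ultrafilter on `I → M` obtained from `w` by successively redrawing the coordinates listed
in `l` at random with respect to `U`, the head of the list being drawn first. -/
def redraw [DecidableEq I] (U : Ultrafilter M) : List I → (I → M) → Ultrafilter (I → M)
  | [], w => pure w
  | i :: l, w => U.bind fun x => redraw U l (Function.update w i x)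

section Redraw

variable [DecidableEq I] (U : Ultrafilter M)

theorem eventually_redraw_nil {P : (I → M) → Prop} {w : I → M} :
    (∀ᶠ z in (redraw U [] w : Filter (I → M)), P z) ↔ P w :=
  Iff.rfl

theorem eventually_redraw_cons {i : I} {l : List I} {P : (I → M) → Prop} {w : I → M} :
    (∀ᶠ z in (redraw U (i :: l) w : Filter (I → M)), P z) ↔
      ∀ᶠ x in (U : Filter M), ∀ᶠ z in (redraw U l (Function.update w i x) : Filter (I → M)), P z :=
  Filter.eventually_bind

theorem eventually_redraw_congr {s : Set I} {P : (I → M) → Prop} (hP : DependsOn P s)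
    (l : List I) {w w' : I → M} (h : ∀ i ∈ s, i ∉ l → w i = w' i) :
    (∀ᶠ z in (redraw U l w : Filter (I → M)), P z) ↔
      ∀ᶠ z in (redraw U l w' : Filter (I → M)), P z := by
  induction l generalizing w w' with
  | nil => exact iff_of_eq (hP fun i hi => h i hi List.not_mem_nil)
  | cons j l ih =>
    simp only [eventually_redraw_cons]
    refine Filter.eventually_congr (.of_forall fun x => ih fun i hi hil => ?_)
    rcases eq_or_ne i j with rfl | hij
    · simp
    · simpa [hij] using h i hi (by simp [hij, hil])

theorem eventually_redraw_filter {s : Finset I} {P : (I → M) → Prop} (hP : DependsOn P s)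
    (l : List I) (w : I → M) :
    (∀ᶠ z in (redraw U l w : Filter (I → M)), P z) ↔
      ∀ᶠ z in (redraw U (l.filter (· ∈ s)) w : Filter (I → M)), P z := by
  induction l generalizing w with
  | nil => rfl
  | cons j l ih =>
    by_cases hj : j ∈ s
    · rw [List.filter_cons_of_pos (by simpa using hj)]
      simp only [eventually_redraw_cons, ih]
    · have hupdate (x : M) : (∀ᶠ z in (redraw U l (Function.update w j x) : Filter (I → M)), P z) ↔
          ∀ᶠ z in (redraw U l w : Filter (I → M)), P z :=
        eventually_redraw_congr U hP l fun i hi _ =>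
          Function.update_of_ne (ne_of_mem_of_not_mem hi hj) x w
      rw [List.filter_cons_of_neg (by simpa using hj), ← ih]
      simp only [eventually_redraw_cons, hupdate, Filter.eventually_const]

theorem eventually_redraw_map [DecidableEq J] {s : Finset I} {σ : I → J} (hσ : Set.InjOn σ s)
    {P : (I → M) → Prop} (hP : DependsOn P s) {l : List I} (hl : ∀ i ∈ l, i ∈ s) (w : J → M)
    {w' : I → M} (h : ∀ i ∈ s, w' i = w (σ i)) :
    (∀ᶠ z in (redraw U l w' : Filter (I → M)), P z) ↔
      ∀ᶠ z in (redraw U (l.map σ) w : Filter (J → M)), P (z ∘ σ) := by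
  induction l generalizing w w' with
  | nil => exact iff_of_eq (hP h)
  | cons j l ih =>
    simp only [List.map_cons, eventually_redraw_cons]
    refine Filter.eventually_congr (.of_forall fun x =>
      ih (fun i hi => hl i (List.mem_cons_of_mem _ hi)) _ fun i hi => ?_)
    rcases eq_or_ne i j with rfl | hij
    · simp
    · have hσij : σ i ≠ σ j := fun e => hij (hσ hi (hl j List.mem_cons_self) e)
      simpa [hij, hσij] using h i hi

end Redraw

variable [LinearOrder I] [LinearOrder J]

theorem eventually_redraw_sort_of_subset (U : Ultrafilter M) {s t : Finset I} (hst : s ⊆ t)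
    {P : (I → M) → Prop} (hP : DependsOn P s) (w : I → M) :
    (∀ᶠ z in (redraw U t.sort w : Filter (I → M)), P z) ↔
      ∀ᶠ z in (redraw U s.sort w : Filter (I → M)), P z := by
  have hsort : t.sort.filter (· ∈ s) = s.sort := by
    refine (((Finset.sortedLT_sort t).pairwise.filter _).sortedLT).eq_of_mem_iff
      (Finset.sortedLT_sort s) fun a => ?_
    simpa using fun ha => hst ha
  rw [eventually_redraw_filter U hP, hsort]

variable [Nonempty M]

/-- The Ehrenfeucht–Mostowski ultrafilter on `I → M`: a limit of the iterated products of `U` over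
the finite subsets of `I`. Under it the coordinates form an order-indiscernible sequence of
realizations of the type of `U`. -/
noncomputable def emUltrafilter (I : Type*) [LinearOrder I] (U : Ultrafilter M) :
    Ultrafilter (I → M) :=
  (Ultrafilter.of Filter.atTop : Ultrafilter (Finset I)).bind fun s =>
    redraw U s.sort fun _ => Classical.arbitrary M

theorem eventually_emUltrafilter (U : Ultrafilter M) {s : Finset I} {P : (I → M) → Prop}
    (hP : DependsOn P s) (w : I → M) :
    (∀ᶠ z in (emUltrafilter I U : Filter (I → M)), P z) ↔
      ∀ᶠ z in (redraw U s.sort w : Filter (I → M)), P z := by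
  have hlarge :
      ∀ᶠ t in ((Ultrafilter.of Filter.atTop : Ultrafilter (Finset I)) : Filter (Finset I)), s ⊆ t :=
    Ultrafilter.of_le _ (Filter.eventually_ge_atTop s)
  refine Filter.eventually_bind.trans ((Filter.eventually_congr ?_).trans Filter.eventually_const)
  filter_upwards [hlarge] with t hst
  rw [eventually_redraw_sort_of_subset U hst hP]
  exact eventually_redraw_congr U hP _ fun i hi hi' => (hi' ((Finset.mem_sort _).2 hi)).elim

theorem eventually_emUltrafilter_comp (U : Ultrafilter M) {s : Finset I} {σ : I → J}
    (hσ : StrictMonoOn σ s) {P : (I → M) → Prop} (hP : DependsOn P s) :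
    (∀ᶠ z in (emUltrafilter J U : Filter (J → M)), P (z ∘ σ)) ↔
      ∀ᶠ z in (emUltrafilter I U : Filter (I → M)), P z := by
  have hPσ : DependsOn (fun z : J → M => P (z ∘ σ)) (s.image σ) := fun z z' h =>
    hP fun i hi => h _ (Finset.mem_coe.2 (Finset.mem_image_of_mem σ hi))
  have hsort : s.sort.map σ = (s.image σ).sort := by
    refine List.SortedLT.eq_of_mem_iff (List.Pairwise.sortedLT ?_) (Finset.sortedLT_sort _)
      (by simp)
    refine List.pairwise_map.2 ((Finset.sortedLT_sort s).pairwise.imp_of_mem fun ha hb hab => ?_)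
    exact hσ ((Finset.mem_sort _).1 ha) ((Finset.mem_sort _).1 hb) hab
  have w : J → M := fun _ => Classical.arbitrary M
  rw [eventually_emUltrafilter U hPσ w, eventually_emUltrafilter U hP (w ∘ σ),
    eventually_redraw_map U hσ.injOn hP (fun i hi => (Finset.mem_sort _).1 hi) w
      (w' := w ∘ σ) fun _ _ => rfl, hsort]

theorem eventually_emUltrafilter_apply_mem (U : Ultrafilter M) (i : I) {S : Set M} (hS : S ∈ U) :
    ∀ᶠ z in (emUltrafilter I U : Filter (I → M)), z i ∈ S := by
  have hdep : DependsOn (fun z : I → M => z i ∈ S) ({i} : Finset I) := fun z z' h => by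
    simp only [h i (by simp)]
  rw [eventually_emUltrafilter U hdep fun _ => Classical.arbitrary M]
  simpa [eventually_redraw_cons, eventually_redraw_nil] using hS

theorem eventually_emUltrafilter_apply_ne {U : Ultrafilter M} (hU : (U : Filter M) ≤ .cofinite)
    {i j : I} (hij : i ≠ j) : ∀ᶠ z in (emUltrafilter I U : Filter (I → M)), z i ≠ z j := by
  wlog hlt : i < j generalizing i j
  · simpa only [ne_comm] using this hij.symm (lt_of_le_of_ne (not_lt.1 hlt) hij.symm)
  have hdep : DependsOn (fun z : I → M => z i ≠ z j) ({i, j} : Finset I) := fun z z' h => by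
    simp only [h i (by simp), h j (by simp)]
  rw [eventually_emUltrafilter U hdep fun _ => Classical.arbitrary M,
    Finset.sort_insert _ (by simpa using hlt.le) (by simpa using hij)]
  simp only [Finset.sort_singleton, eventually_redraw_cons, eventually_redraw_nil,
    Function.update_self, Function.update_of_ne hij]
  refine .of_forall fun x => ?_
  filter_upwards [hU (Set.finite_singleton x).compl_mem_cofinite] with y hy hxy
  exact hy hxy.symm

end IteratedUltrafilter

/-! ### Ultrapowers and categoricity -/

section Ultrapower

/-- The ultrapower of `M` along an ultrafilter `V`. -/
abbrev Ultrapower {W : Type} (V : Ultrafilter W) (M : Type) : Type :=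
  (V : Filter W).Product fun _ => M

/-- The class of `f : W → M` in the ultrapower of `M` along `V`. -/
def Ultrapower.mk {W : Type} (V : Ultrafilter W) {M : Type} (f : W → M) : Ultrapower V M :=
  @Quotient.mk' (W → M) ((V : Filter W).productSetoid fun _ => M) f

variable {W M : Type} (V : Ultrafilter W)

theorem Ultrapower.mk_eq_mk {f g : W → M} :
    Ultrapower.mk V f = Ultrapower.mk V g ↔ ∀ᶠ w in (V : Filter W), f w = g w :=
  @Quotient.eq' _ ((V : Filter W).productSetoid fun _ => M) f g

theorem Ultrapower.mk_surjective : Function.Surjective (Ultrapower.mk V : (W → M) → _) :=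
  @Quotient.mk'_surjective _ ((V : Filter W).productSetoid fun _ => M)

variable {L : FirstOrder.Language.{0, 0}} [L.Structure M] [Nonempty M]

theorem Ultrapower.realize_mk {β : Type} (φ : L.Formula β) (x : β → W → M) :
    φ.Realize (fun b => Ultrapower.mk V (x b)) ↔
      ∀ᶠ w in (V : Filter W), φ.Realize fun b => x b w :=
  Ultraproduct.realize_formula_cast (u := V) (M := fun _ => M) φ x

theorem Ultrapower.realize_mk_sumElim {β γ : Type} (φ : L.Formula (β ⊕ γ)) (x : β → W → M)
    (y : γ → W → M) :
    φ.Realize (Sum.elim (fun b => Ultrapower.mk V (x b)) fun c => Ultrapower.mk V (y c)) ↔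
      ∀ᶠ w in (V : Filter W), φ.Realize (Sum.elim (fun b => x b w) fun c => y c w) := by
  have hcomp {N : Type} (F : (W → M) → N) :
      (fun i => F (Sum.elim x y i)) = Sum.elim (fun b => F (x b)) fun c => F (y c) :=
    Sum.comp_elim F x y
  rw [← hcomp, Ultrapower.realize_mk]
  exact Filter.eventually_congr (.of_forall fun w => by rw [← hcomp fun f => f w])

theorem Ultrapower.realize_snoc_mk {n : ℕ} (φ : L.BoundedFormula Empty (n + 1))
    (x : Fin n → W → M) (y : W → M) :
    φ.Realize default
        (Fin.snoc (fun i => Ultrapower.mk V (x i)) (Ultrapower.mk V y) : _ → Ultrapower V M) ↔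
      ∀ᶠ w in (V : Filter W), φ.Realize default (Fin.snoc (fun i => x i w) (y w) : _ → M) := by
  have hφ {N : Type} [L.Structure N] (xs : Fin (n + 1) → N) :
      φ.Realize default xs ↔ φ.toFormula.Realize (Sum.elim Empty.elim xs) := by
    rw [BoundedFormula.realize_toFormula, Sum.elim_comp_inr,
      Subsingleton.elim (Sum.elim Empty.elim xs ∘ Sum.inl)]
  have hsnoc {N : Type} (F : (W → M) → N) :
      (Fin.snoc (fun i => F (x i)) (F y) : Fin (n + 1) → N) =
        fun i => F ((Fin.snoc x y : Fin (n + 1) → W → M) i) :=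
    (Fin.comp_snoc F x y).symm
  have hempty {N : Type} (F : (W → M) → N) : (Empty.elim : Empty → N) = fun i => F i.elim :=
    Subsingleton.elim _ _
  simp_rw [hφ]
  rw [hsnoc, hempty (Ultrapower.mk V), Ultrapower.realize_mk_sumElim]
  exact Filter.eventually_congr (.of_forall fun w => by
    rw [hsnoc fun f => f w, ← hempty fun f => f w])

theorem Ultrapower.elementarilyEquivalent : Ultrapower V M ≅[L] M := by
  rw [elementarilyEquivalent_iff]
  intro φ
  exact (Ultraproduct.sentence_realize (u := V) (M := fun _ => M) φ).trans Filter.eventually_const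

end Ultrapower

theorem nonempty_equiv_of_categorical {L : FirstOrder.Language.{0, 0}} {M N N' : Type}
    [L.Structure M] [L.Structure N] [L.Structure N'] [Nonempty N] [Nonempty N'] {κ : Cardinal.{0}}
    (hκ : κ.Categorical (L.completeTheory M)) (hN : N ≅[L] M) (hN' : N' ≅[L] M)
    (hcard : Cardinal.mk N = κ) (hcard' : Cardinal.mk N' = κ) : Nonempty (N ≃[L] N') := by
  have hmodel : N ⊨ L.completeTheory M := by rw [← hN]; infer_instance
  have hmodel' : N' ⊨ L.completeTheory M := by rw [← hN']; infer_instance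
  exact hκ (Theory.ModelType.of _ N) (Theory.ModelType.of _ N') hcard hcard'

/-! ### Ehrenfeucht–Mostowski models realize few types -/

section Cuts

instance countable_upperSet {α : Type*} [LinearOrder α] [WellFoundedLT α] [Countable α] :
    Countable (UpperSet α) := by
  have hcover : (Set.univ : Set (UpperSet α)) ⊆ insert ⊤ (Set.range UpperSet.Ici) := fun s _ => by
    rcases s.upper.eq_empty_or_Ici with hs | ⟨a, hs⟩
    · exact Or.inl (UpperSet.ext hs)
    · exact Or.inr ⟨a, UpperSet.ext hs.symm⟩
  exact Set.countable_univ_iff.1 (((Set.countable_range _).insert _).mono hcover)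

variable {I K : Type*} [LinearOrder I] [LinearOrder K] {I₀ : Set I}

/-- The position of `i` relative to `I₀`, encoded by the elements of `I₀` above `i` in the weak and
in the strict sense. -/
def cut (I₀ : Set I) (i : I) : UpperSet I₀ × UpperSet I₀ :=
  (⟨{j | i ≤ j}, fun _ _ hab ha => le_trans ha hab⟩,
    ⟨{j | i < j}, fun _ _ hab ha => lt_of_lt_of_le ha hab⟩)

theorem le_iff_le_of_cut_eq {i i' j : I} (h : cut I₀ i = cut I₀ i') (hj : j ∈ I₀) :
    i ≤ j ↔ i' ≤ j :=
  SetLike.ext_iff.1 (congrArg Prod.fst h) ⟨j, hj⟩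

theorem lt_iff_lt_of_cut_eq {i i' j : I} (h : cut I₀ i = cut I₀ i') (hj : j ∈ I₀) :
    i < j ↔ i' < j :=
  SetLike.ext_iff.1 (congrArg Prod.snd h) ⟨j, hj⟩

theorem exists_strictMonoOn_of_cut_eq {g g' : K → I} (hg : StrictMono g) (hg' : StrictMono g')
    (hcut : ∀ k, cut I₀ (g k) = cut I₀ (g' k)) :
    ∃ σ : I → I, StrictMonoOn σ (I₀ ∪ Set.range g) ∧ (∀ i ∈ I₀, σ i = i) ∧ σ ∘ g = g' := by
  let σ := Function.extend g g' id
  have hσg (k : K) : σ (g k) = g' k := hg.injective.extend_apply g' id k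
  have hσid : ∀ i ∈ I₀, σ i = i := by
    intro i hi
    by_cases hrange : ∃ k, g k = i
    · obtain ⟨k, rfl⟩ := hrange
      refine (hσg k).trans (le_antisymm ((le_iff_le_of_cut_eq (hcut k) hi).1 le_rfl) ?_)
      exact not_lt.1 fun h => lt_irrefl _ ((lt_iff_lt_of_cut_eq (hcut k) hi).2 h)
    · exact Function.extend_apply' _ _ _ hrange
  refine ⟨σ, ?_, hσid, funext hσg⟩
  rintro x (hx | ⟨k, rfl⟩) y (hy | ⟨l, rfl⟩) hxy
  · rwa [hσid x hx, hσid y hy]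
  · rw [hσid x hx, hσg]
    exact lt_of_not_ge fun h => hxy.not_ge ((le_iff_le_of_cut_eq (hcut l) hx).2 h)
  · rw [hσid y hy, hσg]
    exact (lt_iff_lt_of_cut_eq (hcut k) hy).1 hxy
  · rw [hσg, hσg]
    exact hg' (hg.lt_iff_lt.1 hxy)

end Cuts

section DependsOn

variable {L : FirstOrder.Language} {M I : Type*} [L.Structure M] [DecidableEq I]

theorem dependsOn_realize_term (t : L.Term I) :
    DependsOn (fun w : I → M => t.realize w) t.varFinset := fun w w' h => by
  have hw : w ∘ (Subtype.val : ↥(t.varFinset : Set I) → I) = w' ∘ Subtype.val :=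
    funext fun i => h i i.2
  simp only [← Term.realize_restrictVar' (t := t) subset_rfl, hw]

theorem dependsOn_realize_formula (φ : L.Formula I) :
    DependsOn (fun w : I → M => φ.Realize w) φ.freeVarFinset := fun w w' h => by
  have hw : w ∘ (Subtype.val : ↥(φ.freeVarFinset : Set I) → I) = w' ∘ Subtype.val :=
    funext fun i => h i i.2
  simp only [Formula.Realize, ← BoundedFormula.realize_restrictFreeVar' (φ := φ) subset_rfl, hw]

theorem dependsOn_realize_formula_terms {L' : FirstOrder.Language} [L'.Structure M]
    {β : Type*} [DecidableEq β] (φ : L.Formula β) (t : β → L'.Term I) :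
    DependsOn (fun w : I → M => φ.Realize fun b => (t b).realize w)
      (φ.freeVarFinset.biUnion fun b => (t b).varFinset) := fun _ _ h =>
  dependsOn_realize_formula φ fun b hb => dependsOn_realize_term (t b) fun i hi =>
    h i (Finset.mem_coe.2 (Finset.mem_biUnion.2 ⟨b, hb, hi⟩))

end DependsOn

theorem eventually_emUltrafilter_realize_comp {L L' : FirstOrder.Language} {M I J β : Type*}
    [Nonempty M] [L.Structure M] [L'.Structure M] [LinearOrder I] [LinearOrder J]
    (U : Ultrafilter M) (φ : L.Formula β) (t : β → L'.Term I) {T : Set I}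
    (ht : ∀ b, ((t b).varFinset : Set I) ⊆ T) {σ : I → J} (hσ : StrictMonoOn σ T) :
    (∀ᶠ z in (emUltrafilter J U : Filter (J → M)), φ.Realize fun b => (t b).realize (z ∘ σ)) ↔
      ∀ᶠ z in (emUltrafilter I U : Filter (I → M)), φ.Realize fun b => (t b).realize z := by
  classical
  refine eventually_emUltrafilter_comp U (hσ.mono ?_) (dependsOn_realize_formula_terms φ t)
  simpa using fun b _ => ht b

section RealizedTypes

variable (L : FirstOrder.Language.{0, 0}) {N : Type} [L.Structure N]

/-- The complete `m`-types over the family of parameters `a` that are realized in `N`. -/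
def realizedTypes {ι : Type} (a : ι → N) (m : ℕ) : Set (Set (L.Formula (ι ⊕ Fin m))) :=
  Set.range fun v => {φ | φ.Realize (Sum.elim a v)}

variable (N) in
/-- Only countably many types over each countable set of parameters are realized in `N`. -/
def RealizesFewTypes : Prop :=
  ∀ ⦃ι : Type⦄ [Countable ι] (a : ι → N) (m : ℕ), (realizedTypes L a m).Countable

variable {L}

theorem RealizesFewTypes.of_equiv {N' : Type} [L.Structure N'] (h : RealizesFewTypes L N)
    (e : N' ≃[L] N) : RealizesFewTypes L N' := by
  refine fun ι _ a m => (h (e ∘ a) m).mono ?_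
  rintro _ ⟨v, rfl⟩
  refine ⟨e ∘ v, Set.ext fun φ => ?_⟩
  rw [Set.mem_ofPred_eq, Set.mem_ofPred_eq, ← Sum.comp_elim]
  exact StrongHomClass.realize_formula e φ

end RealizedTypes

section SkolemHull

variable {L : FirstOrder.Language.{0, 0}} {M I : Type} [L.Structure M] [Nonempty M] [LinearOrder I]

variable (L I) in
/-- The values of the Skolem terms of `L` at the generic sequence of the ultrapower of `M` along the
Ehrenfeucht–Mostowski ultrafilter. -/
def skolemHull (U : Ultrafilter M) : Set (Ultrapower (emUltrafilter I U) M) :=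
  Set.range fun t : L.skolem₁.Term I => Ultrapower.mk _ fun z => t.realize z

theorem exists_elementarySubstructure_eq_skolemHull [L.IsRelational] (U : Ultrafilter M) :
    ∃ S : L.ElementarySubstructure (Ultrapower (emUltrafilter I U) M),
      (S : Set _) = skolemHull L I U := by
  let S : L.Substructure (Ultrapower (emUltrafilter I U) M) :=
    ⟨skolemHull L I U, fun {_} f => isEmptyElim f⟩
  refine ⟨⟨S, S.isElementary_of_exists fun n φ x a ha => ?_⟩, rfl⟩
  choose t ht using fun i => (x i).2
  obtain ⟨f, rfl⟩ := Ultrapower.mk_surjective _ a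
  let skolemTerm : L.skolem₁.Term I := Term.func (φ : L.skolem₁.Functions n) t
  have hx : Subtype.val ∘ x = fun i => Ultrapower.mk (emUltrafilter I U) fun z => (t i).realize z :=
    funext fun i => (ht i).symm
  rw [hx, Ultrapower.realize_snoc_mk] at ha
  refine ⟨⟨Ultrapower.mk _ fun z => skolemTerm.realize z, skolemTerm, rfl⟩, ?_⟩
  rw [hx, Ultrapower.realize_snoc_mk]
  filter_upwards [ha] with z hz
  exact Classical.epsilon_spec (p := fun a => φ.Realize default
    (Fin.snoc (fun i => (t i).realize z) a : _ → M)) ⟨_, hz⟩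

end SkolemHull

theorem varFinset_relabel_subset_range {L : FirstOrder.Language} {α β : Type*} [DecidableEq β]
    (t : L.Term α) (g : α → β) : ((t.relabel g).varFinset : Set β) ⊆ Set.range g := by
  induction t with
  | var a => simp [Term.relabel, Term.varFinset]
  | func f ts ih => simpa [Term.relabel, Term.varFinset] using ih

section SkolemHull

variable {L : FirstOrder.Language.{0, 0}} {M I : Type} [L.Structure M] [Nonempty M] [LinearOrder I]
  (U : Ultrafilter M)

theorem exists_eq_mk_realize_comp_of_mem_skolemHull {m : ℕ}
    {v : Fin m → Ultrapower (emUltrafilter I U) M} (hv : ∀ l, v l ∈ skolemHull L I U) :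
    ∃ (k : ℕ) (T : Fin m → L.skolem₁.Term (Fin k)) (g : Fin k ↪o I),
      v = fun l => Ultrapower.mk _ fun z => (T l).realize (z ∘ g) := by
  classical
  choose t ht using hv
  let s : Finset I := Finset.univ.biUnion fun l => (t l).varFinset
  have hs (l : Fin m) : (t l).varFinset ⊆ s :=
    Finset.subset_biUnion_of_mem (fun l => (t l).varFinset) (Finset.mem_univ l)
  refine ⟨s.card, fun l => (t l).restrictVar fun i => (s.orderIsoOfFin rfl).symm ⟨i, hs l i.2⟩,
    s.orderEmbOfFin rfl, funext fun l => (ht l).symm.trans <|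
      congrArg (Ultrapower.mk _) (funext fun z => ?_)⟩
  refine (Term.realize_restrictVar _ fun i => ?_).symm
  simp [← Finset.coe_orderIsoOfFin_apply]

theorem realize_mk_comp_iff_of_cut_eq {ι β K : Type} [LinearOrder K] (φ : L.Formula (ι ⊕ β))
    {t : ι → L.skolem₁.Term I} {I₀ : Set I} (ht : ∀ j, ((t j).varFinset : Set I) ⊆ I₀)
    (T : β → L.skolem₁.Term K) {g g' : K ↪o I} (hcut : ∀ k, cut I₀ (g k) = cut I₀ (g' k)) :
    φ.Realize (Sum.elim (fun j => Ultrapower.mk (emUltrafilter I U) fun z => (t j).realize z)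
        fun l => Ultrapower.mk _ fun z => (T l).realize (z ∘ g)) ↔
      φ.Realize (Sum.elim (fun j => Ultrapower.mk (emUltrafilter I U) fun z => (t j).realize z)
        fun l => Ultrapower.mk _ fun z => (T l).realize (z ∘ g')) := by
  classical
  obtain ⟨σ, hσ, hσid, hσg⟩ := exists_strictMonoOn_of_cut_eq g.strictMono g'.strictMono hcut
  let t' : ι ⊕ β → L.skolem₁.Term I := Sum.elim t fun l => (T l).relabel g
  have ht' : ∀ b, ((t' b).varFinset : Set I) ⊆ I₀ ∪ Set.range g := by
    rintro (j | l)
    · exact (ht j).trans Set.subset_union_left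
    · exact (varFinset_relabel_subset_range (T l) g).trans Set.subset_union_right
  have ht'g (z : I → M) : (fun b => (t' b).realize z) =
      Sum.elim (fun j => (t j).realize z) fun l => (T l).realize (z ∘ g) := by
    funext b; cases b <;> simp [t']
  have ht'g' (z : I → M) : (fun b => (t' b).realize (z ∘ σ)) =
      Sum.elim (fun j => (t j).realize z) fun l => (T l).realize (z ∘ g') := by
    funext b
    rcases b with j | l
    · exact dependsOn_realize_term (t j) fun i hi => congrArg z (hσid i (ht j hi))
    · simp [t', ← hσg, Function.comp_assoc]
  rw [Ultrapower.realize_mk_sumElim, Ultrapower.realize_mk_sumElim]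
  simp only [← ht'g, ← ht'g']
  exact (eventually_emUltrafilter_realize_comp U φ t' ht' hσ).symm

instance countable_skolem₁_functions [Countable L.Symbols] :
    Countable (Σ l, L.skolem₁.Functions l) := by
  have hinj : Function.Injective fun f : Σ l, L.skolem₁.Functions l =>
      (⟨f.1 + 1, f.2⟩ : Σ n, L.BoundedFormula Empty n) := by
    rintro ⟨l, f⟩ ⟨l', f'⟩ h
    obtain ⟨hl, hf⟩ := Sigma.mk.inj h
    exact Sigma.ext (Nat.succ_injective hl) hf
  exact hinj.countable

theorem realizesFewTypes_of_coe_eq_skolemHull [Countable L.Symbols] [WellFoundedLT I]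
    {S : L.ElementarySubstructure (Ultrapower (emUltrafilter I U) M)}
    (hS : (S : Set _) = skolemHull L I U) : RealizesFewTypes L S := by
  classical
  intro ι _ a m
  choose t ht using fun j => hS.subset (a j).2
  let I₀ : Set I := ⋃ j, (t j).varFinset
  have : Countable I₀ := (Set.countable_iUnion fun j => (t j).varFinset.countable_toSet).to_subtype
  let typesOfShape (k : ℕ) (T : Fin m → L.skolem₁.Term (Fin k))
      (c : Fin k → UpperSet I₀ × UpperSet I₀) : Set (Set (L.Formula (ι ⊕ Fin m))) :=
    {p | ∃ g : Fin k ↪o I, (∀ i, cut I₀ (g i) = c i) ∧ p = {φ | φ.Realize (Sum.elim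
      (fun j => Ultrapower.mk (emUltrafilter I U) fun z => (t j).realize z)
      fun l => Ultrapower.mk (emUltrafilter I U) fun z => (T l).realize (z ∘ g))}}
  have hshape (k T c) : (typesOfShape k T c).Subsingleton := by
    rintro _ ⟨g, hg, rfl⟩ _ ⟨g', hg', rfl⟩
    exact Set.ext fun φ => realize_mk_comp_iff_of_cut_eq U φ (Set.subset_iUnion _) T
      fun i => (hg i).trans (hg' i).symm
  have hcover : realizedTypes L a m ⊆ ⋃ (k) (T) (c), typesOfShape k T c := by
    rintro _ ⟨v, rfl⟩
    obtain ⟨k, T, g, hv⟩ :=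
      exists_eq_mk_realize_comp_of_mem_skolemHull U fun l => hS.subset (v l).2
    refine Set.mem_iUnion₂.2 ⟨k, T, Set.mem_iUnion.2
      ⟨fun i => cut I₀ (g i), g, fun _ => rfl, Set.ext fun φ => ?_⟩⟩
    rw [Set.mem_ofPred_eq, Set.mem_ofPred_eq, ← S.subtype.map_formula, Sum.comp_elim]
    exact iff_of_eq (congrArg₂ (fun x y => φ.Realize (Sum.elim x y))
      (funext fun j => (ht j).symm) hv)
  exact .mono hcover (countable_iUnion fun k => countable_iUnion fun T =>
    countable_iUnion fun c => (hshape k T c).countable)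

theorem mk_eval_injective (hU : (U : Filter M) ≤ .cofinite) :
    Function.Injective fun i : I => Ultrapower.mk (emUltrafilter I U) fun z => z i := by
  refine fun i j hij => by_contra fun hne => ?_
  obtain ⟨z, hz, hz'⟩ := ((eventually_emUltrafilter_apply_ne hU hne).and
    ((Ultrapower.mk_eq_mk _).1 hij)).exists
  exact hz hz'

variable {U} in
theorem mk_skolemHull [Countable L.Symbols] [Infinite I] (hU : (U : Filter M) ≤ .cofinite) :
    Cardinal.mk (skolemHull L I U) = Cardinal.mk I := by
  have hI := Cardinal.aleph0_le_mk I
  refine le_antisymm (Cardinal.mk_range_le.trans (Term.card_le.trans (max_le hI ?_))) ?_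
  · rw [Cardinal.mk_sum, Cardinal.lift_id, Cardinal.lift_id]
    exact Cardinal.add_le_of_le hI le_rfl (Cardinal.mk_le_aleph0.trans hI)
  · exact Cardinal.mk_le_of_injective (f := fun i : I =>
      ⟨Ultrapower.mk (emUltrafilter I U) fun z => z i, Term.var i, rfl⟩)
      fun i j hij => mk_eval_injective U hU (congrArg Subtype.val hij)

end SkolemHull

theorem nonempty_of_mk_eq_aleph {N : Type} {o : Ordinal.{0}}
    (h : Cardinal.mk N = Cardinal.aleph o) : Nonempty N :=
  Cardinal.mk_ne_zero_iff.1 (h ▸ (Cardinal.aleph_pos o).ne')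

theorem realizesFewTypes_of_categorical {L : FirstOrder.Language.{0, 0}} [L.IsRelational]
    [Countable L.Symbols] {M : Type} [L.Structure M] [Infinite M]
    (hcat : (Cardinal.aleph.{0} 1).Categorical (L.completeTheory M)) {N : Type} [L.Structure N]
    (hN : N ≅[L] M) (hcard : Cardinal.mk N = Cardinal.aleph 1) : RealizesFewTypes L N := by
  let ω₁ := (Cardinal.aleph.{0} 1).ord.ToType
  have hω₁ : Cardinal.mk ω₁ = Cardinal.aleph 1 := Cardinal.mk_ord_toType _
  have : Infinite ω₁ := Cardinal.infinite_iff.2 (hω₁ ▸ Cardinal.aleph0_le_aleph 1)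
  obtain ⟨S, hS⟩ :=
    exists_elementarySubstructure_eq_skolemHull (L := L) (I := ω₁) (Filter.hyperfilter M)
  have hcardS : Cardinal.mk S = Cardinal.aleph 1 :=
    (congrArg (fun T : Set _ => Cardinal.mk T) hS).trans
      ((mk_skolemHull Filter.hyperfilter_le_cofinite).trans hω₁)
  have := nonempty_of_mk_eq_aleph hcard
  have := nonempty_of_mk_eq_aleph hcardS
  obtain ⟨e⟩ := nonempty_equiv_of_categorical hcat hN
    (S.elementarilyEquivalent.trans (Ultrapower.elementarilyEquivalent _)) hcard hcardS
  exact (realizesFewTypes_of_coe_eq_skolemHull _ hS).of_equiv e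

section FewTypes

variable {L : FirstOrder.Language.{0, 0}} {M N : Type} [L.Structure M] [L.Structure N]

variable [Countable L.Symbols]

theorem exists_elementarySubstructure_mk_eq {κ : Cardinal.{0}} (hκ : Cardinal.aleph0 ≤ κ)
    {s : Set N} (hs : Cardinal.mk s ≤ κ) (hN : κ ≤ Cardinal.mk N) :
    ∃ S : L.ElementarySubstructure N, s ⊆ S ∧ Cardinal.mk S = κ := by
  have : Nonempty N := Cardinal.mk_ne_zero_iff.1 (Cardinal.aleph0_pos.trans_le (hκ.trans hN)).ne'
  have hL : L.card ≤ κ := Cardinal.mk_le_aleph0.trans hκ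
  simpa using exists_elementarySubstructure_card_eq L s κ hκ (by simpa using hs)
    (by simpa using hL) (by simpa using hN)

theorem realizesFewTypes_of_forall_mk_eq_aleph_one
    (h : ∀ S : L.ElementarySubstructure N, Cardinal.mk S = Cardinal.aleph 1 →
      RealizesFewTypes L S) : RealizesFewTypes L N := by
  intro ι _ a m
  by_contra huncountable
  have hlarge : Cardinal.aleph 1 ≤ Cardinal.mk (realizedTypes L a m) := by
    rwa [← Cardinal.succ_aleph0, Order.succ_le_iff, ← not_le, Cardinal.le_aleph0_iff_set_countable]
  have hN : Cardinal.aleph 1 ≤ Cardinal.mk N := by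
    rw [← Cardinal.succ_aleph0, Order.succ_le_iff, ← not_le, Cardinal.mk_le_aleph0_iff]
    exact fun _ => huncountable (Set.countable_range _)
  obtain ⟨T, hT, hcard⟩ := Cardinal.le_mk_iff_exists_subset.1 hlarge
  choose v hv using fun p : T => hT p.2
  let s : Set N := Set.range a ∪ Set.range fun x : T × Fin m => v x.1 x.2
  have hs : Cardinal.mk s ≤ Cardinal.aleph 1 := by
    have hω := Cardinal.aleph0_le_aleph.{0} 1
    refine (Cardinal.mk_union_le _ _).trans (Cardinal.add_le_of_le hω
      (Cardinal.mk_range_le.trans (Cardinal.mk_le_aleph0.trans hω)) (Cardinal.mk_range_le.trans ?_))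
    rw [Cardinal.mk_prod, Cardinal.lift_id, Cardinal.lift_id]
    exact Cardinal.mul_le_of_le hω hcard.le (Cardinal.mk_le_aleph0.trans hω)
  obtain ⟨S, hsS, hS⟩ := exists_elementarySubstructure_mk_eq (L := L)
    (Cardinal.aleph0_le_aleph 1) hs hN
  refine (hcard.trans_gt Cardinal.aleph0_lt_aleph_one).not_ge ?_
  refine Cardinal.le_aleph0_iff_set_countable.2 ((h S hS
    (fun j => ⟨a j, hsS (Or.inl ⟨j, rfl⟩)⟩) m).mono ?_)
  rintro p hp
  refine ⟨fun l => ⟨v ⟨p, hp⟩ l, hsS (Or.inr ⟨⟨⟨p, hp⟩, l⟩, rfl⟩)⟩, Eq.trans ?_ (hv ⟨p, hp⟩)⟩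
  ext φ
  rw [Set.mem_ofPred_eq, ← S.subtype.map_formula, Sum.comp_elim]
  rfl

end FewTypes

section HasFewTraces

/-- `ω`-stability of `N`: a countable family of sets definable with parameters admits only countably
many complete types. Such a type is encoded as the trace of an ultrafilter on the family. -/
def HasFewTraces (L : FirstOrder.Language.{0, 0}) (N : Type) [L.Structure N] : Prop :=
  ∀ ⦃m : ℕ⦄ ⦃ι : Type⦄ [Countable ι] (P : ι → Set (Fin m → N)),
    (∀ j, (Set.univ : Set N).Definable L (P j)) →
      (Set.range fun U : Ultrafilter (Fin m → N) => {j | P j ∈ U}).Countable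

theorem eventually_of_pi_iff {ι : Type*} {α : ι → Type*} (u : ∀ i, Ultrafilter (α i)) (i : ι)
    (p : α i → Prop) :
    (∀ᶠ w in (Ultrafilter.of (Filter.pi fun i => (u i : Filter (α i))) : Filter (∀ i, α i)),
      p (w i)) ↔ ∀ᶠ x in (u i : Filter (α i)), p x := by
  have hmap : (Ultrafilter.of (Filter.pi fun i => (u i : Filter (α i)))).map (Function.eval i) =
      u i := Ultrafilter.coe_le_coe.1
    ((Filter.tendsto_eval_pi _ i).mono_left (Ultrafilter.of_le _))
  rw [← hmap]
  rfl

variable {L : FirstOrder.Language.{0, 0}} {M N : Type} [L.Structure M] [L.Structure N]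

theorem exists_countable_forall_definable {ι α : Type} [Countable ι] {P : ι → Set (α → N)}
    {A : Set N} (hP : ∀ j, A.Definable L (P j)) :
    ∃ B : Set N, B.Countable ∧ ∀ j, B.Definable L (P j) := by
  choose B _ hB using fun j => Set.definable_iff_finitely_definable.1 (hP j)
  exact ⟨⋃ j, B j, Set.countable_iUnion fun j => (B j).countable_toSet,
    fun j => (hB j).mono (Set.subset_iUnion (fun j => (B j : Set N)) j)⟩

theorem hasFewTraces_of_forall_realizesFewTypes [Nonempty N]
    (h : ∀ N' : Type, ∀ _ : L.Structure N', N' ≅[L] N → RealizesFewTypes L N') :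
    HasFewTraces L N := by
  intro m ι _ P hP
  obtain ⟨B, hBcount, hB⟩ := exists_countable_forall_definable hP
  choose φ hφ using fun j => Set.definable_iff_exists_formula_sum.1 (hB j)
  have : Countable B := hBcount.to_subtype
  let V := Ultrafilter.of (Filter.pi fun U : Ultrafilter (Fin m → N) => (U : Filter (Fin m → N)))
  let b : B → Ultrapower V N := fun x => Ultrapower.mk V fun _ => x
  refine ((h _ _ (Ultrapower.elementarilyEquivalent V) b m).image
    fun p => {j | φ j ∈ p}).mono ?_
  rintro _ ⟨U, rfl⟩
  refine ⟨_, ⟨fun l => Ultrapower.mk V fun w => w U l, rfl⟩, Set.ext fun j => ?_⟩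
  simp only [Set.mem_ofPred_eq, b]
  rw [Ultrapower.realize_mk_sumElim, eventually_of_pi_iff (fun U => U) U
    fun x => (φ j).Realize (Sum.elim Subtype.val x), hφ j]
  rfl

theorem hasFewTraces_of_categorical [L.IsRelational] [Countable L.Symbols] [Infinite M] [Nonempty N]
    (hcat : (Cardinal.aleph.{0} 1).Categorical (L.completeTheory M)) (hN : N ≅[L] M) :
    HasFewTraces L N :=
  hasFewTraces_of_forall_realizesFewTypes fun _ _ hN' =>
    realizesFewTypes_of_forall_mk_eq_aleph_one fun S hS =>
      realizesFewTypes_of_categorical hcat (S.elementarilyEquivalent.trans (hN'.trans hN)) hS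

end HasFewTraces

section HasFewTraces

theorem exists_ultrafilter_forall_mem {α : Type*} {F : ℕ → Set α} (hanti : Antitone F)
    (hne : ∀ n, (F n).Nonempty) : ∃ U : Ultrafilter α, ∀ n, F n ∈ U := by
  have : (⨅ n, Filter.principal (F n)).NeBot := Filter.iInf_neBot_of_directed'
    (directed_of_isDirected_le fun _ _ hnm => Filter.principal_mono.2 (hanti hnm))
    fun n => Filter.principal_neBot_iff.2 (hne n)
  exact ⟨.of _, fun n =>
    Ultrafilter.of_le _ (Filter.mem_iInf_of_mem n (Filter.mem_principal_self _))⟩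

variable {L : FirstOrder.Language.{0, 0}} {N : Type} [L.Structure N] {m : ℕ}

theorem HasFewTraces.exists_branch_forall_exists_not_iff (h : HasFewTraces L N)
    {P : List Bool → Set (Fin m → N)} (hP : ∀ l, (Set.univ : Set N).Definable L (P l)) :
    ∃ (f : ℕ → Bool) (n : ℕ), ∀ v, ∃ i < n, ¬ (v ∈ P (PiNat.res f i) ↔ f i) := by
  by_contra! hbranch
  let F (f : ℕ → Bool) (n : ℕ) : Set (Fin m → N) := {v | ∀ i < n, v ∈ P (PiNat.res f i) ↔ f i}
  have hF (f : ℕ → Bool) : Antitone (F f) := fun _ _ hnm _ hv i hi => hv i (hi.trans_le hnm)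
  choose U hU using fun f => exists_ultrafilter_forall_mem (hF f) (hbranch f)
  have hUP (f : ℕ → Bool) (n : ℕ) : P (PiNat.res f n) ∈ U f ↔ f n := by
    refine ⟨fun hn => ?_, fun hn => ?_⟩
    · obtain ⟨v, hv, hvF⟩ := (U f).nonempty_of_mem (Filter.inter_mem hn (hU f (n + 1)))
      exact (hvF n n.lt_succ_self).1 hv
    · exact Filter.mem_of_superset (hU f (n + 1)) fun v hv => (hv n n.lt_succ_self).2 hn
  have hinj : Function.Injective fun f => {l | P l ∈ U f} := by
    refine fun f f' hff' => PiNat.res_injective (funext fun n => ?_)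
    induction n with
    | zero => rfl
    | succ n ih =>
      have hn : f n ↔ f' n := by
        rw [← hUP, ← hUP, ← ih]
        exact Set.ext_iff.1 hff' (PiNat.res f n)
      rw [PiNat.res_succ, PiNat.res_succ, ih, Bool.eq_iff_iff.2 hn]
  have hcountable := (h P hP).mono (Set.range_comp_subset_range U fun U => {l | P l ∈ U})
  have : Uncountable (ℕ → Bool) := by
    rw [← Cardinal.aleph0_lt_mk_iff]
    simpa using Cardinal.cantor Cardinal.aleph0
  exact not_countable (α := ℕ → Bool) (Set.countable_univ_iff.1
    (Set.countable_of_injective_of_countable_image hinj.injOn (by rwa [Set.image_univ])))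

theorem HasFewTraces.exists_set_forall_exists_not_iff (h : HasFewTraces L N)
    {P : ℕ → Set (Fin m → N)} (hP : ∀ j, (Set.univ : Set N).Definable L (P j)) :
    ∃ (s : Set ℕ) (n : ℕ), ∀ v, ∃ i < n, ¬ (v ∈ P i ↔ i ∈ s) := by
  obtain ⟨f, n, hfn⟩ := h.exists_branch_forall_exists_not_iff fun l => hP l.length
  exact ⟨{i | f i}, n, by simpa only [PiNat.res_length, Set.mem_ofPred_eq] using hfn⟩

end HasFewTraces

section Isolating

variable {L : FirstOrder.Language.{0, 0}} {N : Type} [L.Structure N] {α : Type}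

variable (L) in
/-- The nonempty `A`-definable set `Ψ` isolates a complete type over `A`: no `A`-definable set
splits it. -/
structure IsIsolating (A : Set N) (Ψ : Set (α → N)) : Prop where
  definable : A.Definable L Ψ
  nonempty : Ψ.Nonempty
  subset_or_disjoint : ∀ s, A.Definable L s → Ψ ⊆ s ∨ Disjoint Ψ s

theorem HasFewTraces.exists_isIsolating_subset (h : HasFewTraces L N) {m : ℕ} {A : Set N}
    {Φ : Set (Fin m → N)} (hΦ : A.Definable L Φ) (hne : Φ.Nonempty) :
    ∃ Ψ ⊆ Φ, IsIsolating L A Ψ := by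
  by_contra! hsplit
  let T := {Ψ : Set (Fin m → N) // Ψ ⊆ Φ ∧ A.Definable L Ψ ∧ Ψ.Nonempty}
  have hT (Ψ : T) : ∃ s, A.Definable L s ∧ ¬ Ψ.1 ⊆ s ∧ ¬ Disjoint Ψ.1 s := by
    by_contra! hs
    exact hsplit Ψ.1 Ψ.2.1 ⟨Ψ.2.2.1, Ψ.2.2.2, fun s hsA => or_iff_not_imp_left.2 (hs s hsA)⟩
  choose s hsdef hsub hdisj using hT
  let child (b : Bool) (Ψ : T) : T := if b then
      ⟨Ψ.1 ∩ s Ψ, inter_subset_left.trans Ψ.2.1, Ψ.2.2.1.inter (hsdef Ψ),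
        Set.not_disjoint_iff_nonempty_inter.1 (hdisj Ψ)⟩
    else ⟨Ψ.1 \ s Ψ, sdiff_subset.trans Ψ.2.1, Ψ.2.2.1.sdiff (hsdef Ψ),
      Set.sdiff_nonempty.2 (hsub Ψ)⟩
  have hchild {b : Bool} {Ψ : T} {v} (hv : v ∈ (child b Ψ).1) : v ∈ Ψ.1 ∧ (v ∈ s Ψ ↔ b) := by
    cases b <;> simpa [child] using hv
  let node (l : List Bool) : T := l.foldr child ⟨Φ, subset_rfl, hΦ, hne⟩
  obtain ⟨f, n, hfn⟩ := h.exists_branch_forall_exists_not_iff fun l =>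
    (hsdef (node l)).mono (Set.subset_univ A)
  have hnode (n : ℕ) : ∀ v ∈ (node (PiNat.res f n)).1,
      ∀ i < n, v ∈ s (node (PiNat.res f i)) ↔ f i := by
    induction n with
    | zero => simp
    | succ n ih =>
      intro v hv i hi
      obtain rfl | hi := Nat.lt_succ_iff_lt_or_eq.1 hi |>.symm
      · exact (hchild hv).2
      · exact ih v (hchild hv).1 i hi
  obtain ⟨v, hv⟩ := (node (PiNat.res f n)).2.2.2
  obtain ⟨i, hi, hni⟩ := hfn v
  exact hni (hnode n v hv i hi)

end Isolating

/-! ### Atomicity -/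

section Atomic

variable {L : FirstOrder.Language.{0, 0}} {M : Type} [L.Structure M] {A : Set M} {α β γ : Type}

theorem IsIsolating.subset_of_mem {Ψ s : Set (α → M)} (h : IsIsolating L A Ψ)
    (hs : A.Definable L s) {v : α → M} (hv : v ∈ Ψ) (hvs : v ∈ s) : Ψ ⊆ s :=
  (h.subset_or_disjoint s hs).resolve_right fun hd => Set.disjoint_left.1 hd hv hvs

theorem definable_setOf_sumElim_mem {S : Set (β ⊕ α → M)} (hS : (∅ : Set M).Definable L S)
    {w : β → M} (hw : ∀ b, w b ∈ A) : A.Definable L {z : α → M | Sum.elim w z ∈ S} := by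
  obtain ⟨φ, rfl⟩ := Set.empty_definable_iff.1 hS
  refine Set.definable_iff_exists_formula_sum.2
    ⟨φ.relabel (Sum.map (fun b => (⟨w b, hw b⟩ : A)) id), Set.ext fun v => ?_⟩
  simp only [Set.mem_ofPred_eq]
  rw [Formula.realize_relabel, Sum.elim_comp_map]
  rfl

theorem exists_finset_eq_setOf_sumElim_mem {s : Set (α → M)} (hs : A.Definable L s) :
    ∃ B : Finset M, (B : Set M) ⊆ A ∧ ∃ S : Set (B ⊕ α → M),
      (∅ : Set M).Definable L S ∧ s = {v | Sum.elim Subtype.val v ∈ S} := by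
  obtain ⟨B, hBA, hB⟩ := Set.definable_iff_finitely_definable.1 hs
  obtain ⟨φ, rfl⟩ := Set.definable_iff_exists_formula_sum.1 hB
  exact ⟨B, hBA, {v | φ.Realize v}, Set.empty_definable_iff.2 ⟨φ, rfl⟩, rfl⟩

variable (L) in
/-- The complete type of `v` over the empty set is isolated. -/
def HasIsolatedType (v : α → M) : Prop :=
  ∃ Ψ, v ∈ Ψ ∧ IsIsolating L (∅ : Set M) Ψ

theorem HasIsolatedType.comp [Finite α] [Finite β] {v : β → M} (h : HasIsolatedType L v)
    (f : α → β) : HasIsolatedType L (v ∘ f) := by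
  obtain ⟨Ψ, hv, hΨ⟩ := h
  refine ⟨(fun g : β → M => g ∘ f) '' Ψ, ⟨v, hv, rfl⟩, hΨ.definable.image_comp f, ⟨_, v, hv, rfl⟩,
    fun s hs => ?_⟩
  rw [Set.image_subset_iff, Set.disjoint_image_left]
  exact hΨ.subset_or_disjoint _ (hs.preimage_comp f)

theorem HasIsolatedType.sumElim [Finite β] [Finite γ] {w : β → M} (hw : HasIsolatedType L w)
    {P : Set (β ⊕ γ → M)} (hP : (∅ : Set M).Definable L P) {A : Set M} (hwA : ∀ b, w b ∈ A)
    (hiso : IsIsolating L A {z | Sum.elim w z ∈ P}) {c : γ → M} (hc : Sum.elim w c ∈ P) :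
    HasIsolatedType L (Sum.elim w c) := by
  obtain ⟨Ψ, hwΨ, hΨ⟩ := hw
  let lift : Set (β ⊕ γ → M) := {x | x ∘ Sum.inl ∈ Ψ} ∩ P
  have hlift : (∅ : Set M).Definable L lift := (hΨ.definable.preimage_comp Sum.inl).inter hP
  have hsub {s : Set (β ⊕ γ → M)} (hs : (∅ : Set M).Definable L s) (hcs : Sum.elim w c ∈ s) :
      lift ⊆ s := by
    have hfibre : {z | Sum.elim w z ∈ P} ⊆ {z | Sum.elim w z ∈ s} :=
      hiso.subset_of_mem (definable_setOf_sumElim_mem hs hwA) hc hcs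
    have hw : w ∈ ((fun x : β ⊕ γ → M => x ∘ Sum.inl) '' (P \ s))ᶜ := by
      rintro ⟨x, ⟨hxP, hxs⟩, rfl⟩
      rw [← Sum.elim_comp_inl_inr x] at hxP hxs
      exact hxs (hfibre hxP)
    have hΨs := hΨ.subset_of_mem ((hP.sdiff hs).image_comp Sum.inl).compl hwΨ hw
    exact fun x hx => by_contra fun hxs => hΨs hx.1 ⟨x, ⟨hx.2, hxs⟩, rfl⟩
  have hmem : Sum.elim w c ∈ lift := ⟨hwΨ, hc⟩
  refine ⟨lift, hmem, hlift, ⟨_, hmem⟩, fun s hs => ?_⟩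
  by_cases hcs : Sum.elim w c ∈ s
  · exact Or.inl (hsub hs hcs)
  · exact Or.inr (Set.subset_compl_iff_disjoint_right.1 (hsub hs.compl hcs))

variable (L) in
/-- Every finite tuple from `A` has an isolated type over the empty set. -/
def IsAtomicSet (A : Set M) : Prop :=
  ∀ ⦃α : Type⦄ [Finite α] (v : α → M), (∀ i, v i ∈ A) → HasIsolatedType L v

theorem IsAtomicSet.insert (hA : IsAtomicSet L A) {Ψ : Set (Fin 1 → M)}
    (hΨ : IsIsolating L A Ψ) {c : Fin 1 → M} (hc : c ∈ Ψ) : IsAtomicSet L (insert (c 0) A) := by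
  classical
  intro α _ v hv
  obtain ⟨B, hBA, P, hP, rfl⟩ := exists_finset_eq_setOf_sumElim_mem hΨ.definable
  let w : B ⊕ {i // v i ∈ A} → M := Sum.elim Subtype.val fun i => v i
  have hw : ∀ b, w b ∈ A := Sum.rec (fun b => hBA b.2) fun i => i.2
  let drop : B ⊕ Fin 1 → (B ⊕ {i // v i ∈ A}) ⊕ Fin 1 := Sum.map Sum.inl id
  have hdrop (z : Fin 1 → M) : Sum.elim w z ∘ drop = Sum.elim Subtype.val z := by
    rw [Sum.elim_comp_map, Sum.elim_comp_inl, Function.comp_id]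
  let f (i : α) : (B ⊕ {i // v i ∈ A}) ⊕ Fin 1 :=
    if hi : v i ∈ A then Sum.inl (Sum.inr ⟨i, hi⟩) else Sum.inr 0
  have hf : v = Sum.elim w c ∘ f := by
    funext i
    by_cases hi : v i ∈ A
    · simp [f, hi, w]
    · simpa [f, hi] using (hv i).resolve_right hi
  rw [hf]
  refine ((hA w hw).sumElim (hP.preimage_comp drop) hw ?_ ?_).comp f
  · simpa only [Set.mem_preimage, hdrop] using hΨ
  · simpa only [Set.mem_preimage, hdrop, Set.mem_ofPred_eq] using hc

theorem isAtomicSet_empty : IsAtomicSet L (∅ : Set M) := by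
  intro α _ v hv
  have : IsEmpty α := ⟨fun i => hv i⟩
  refine ⟨Set.univ, trivial, Set.definable_univ, ⟨v, trivial⟩, fun s _ => ?_⟩
  rcases s.eq_empty_or_nonempty with rfl | hs
  · exact Or.inr (Set.disjoint_empty _)
  · exact Or.inl (Subsingleton.eq_univ_of_nonempty hs).superset

variable (L M) in
theorem exists_maximal_isAtomicSet : ∃ A : Set M, Maximal (IsAtomicSet L) A := by
  refine (zorn_subset_nonempty {A : Set M | IsAtomicSet L A} (fun c hc hchain hne =>
    ⟨⋃₀ c, fun α _ v hv => ?_, fun s hs => Set.subset_sUnion_of_mem hs⟩) ∅ isAtomicSet_empty).imp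
    fun _ => And.right
  obtain ⟨t, ht, hvt⟩ := DirectedOn.exists_mem_subset_of_finite_of_subset_sUnion hne
    hchain.directedOn (Set.finite_range v) (Set.range_subset_iff.2 hv)
  exact hc ht v fun i => hvt ⟨i, rfl⟩

theorem meetsDefinable_of_maximal_isAtomicSet (h : HasFewTraces L M)
    (hA : Maximal (IsAtomicSet L) A) : L.MeetsDefinable A := by
  rintro s ⟨x, hx⟩ hs
  obtain ⟨Ψ, hΨs, hΨ⟩ := h.exists_isIsolating_subset hs ⟨fun _ => x, hx⟩
  obtain ⟨c, hc⟩ := hΨ.nonempty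
  exact ⟨c 0, hΨs hc, hA.2 (hA.1.insert hΨ hc) (Set.subset_insert _ _) (Set.mem_insert _ _)⟩

variable (M) in
/-- Any two countable models are isomorphic, hence `M` is isomorphic to an atomic elementary
substructure. -/
theorem isAtomicSet_univ [Infinite M] [Countable M] (h : HasFewTraces L M)
    (hcat : (Cardinal.aleph0.{0}).Categorical (L.completeTheory M)) :
    IsAtomicSet L (Set.univ : Set M) := by
  intro α _ v _
  obtain ⟨A, hA⟩ := exists_maximal_isAtomicSet L M
  have hmeets := meetsDefinable_of_maximal_isAtomicSet h hA
  let S := hmeets.toElementarySubstructure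
  have hS (x : S) : (x : M) ∈ A := hmeets.closure_eq_self.subset x.2
  have : Infinite S := (S.elementarilyEquivalent.infinite_iff).2 ‹_›
  obtain ⟨e⟩ := nonempty_equiv_of_categorical hcat (rfl : M ≅[L] M) S.elementarilyEquivalent
    (Cardinal.mk_eq_aleph0 M) (Cardinal.mk_eq_aleph0 S)
  have hrealize (φ : L.Formula α) : φ.Realize (fun i => (e (v i) : M)) ↔ φ.Realize v :=
    (S.subtype.map_formula φ (e ∘ v)).trans (StrongHomClass.realize_formula e φ)
  have hmem {s : Set (α → M)} (hs : (∅ : Set M).Definable L s) :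
      (fun i => (e (v i) : M)) ∈ s ↔ v ∈ s := by
    obtain ⟨φ, rfl⟩ := Set.empty_definable_iff.1 hs
    exact hrealize φ
  obtain ⟨Ψ, hevΨ, hΨ⟩ := hA.1 (fun i => (e (v i) : M)) fun i => hS (e (v i))
  exact ⟨Ψ, (hmem hΨ.definable).1 hevΨ, hΨ⟩

end Atomic

/-! ### Homogeneity -/

section SameType

variable {L : FirstOrder.Language.{0, 0}} {M N : Type} [L.Structure M] [L.Structure N] {α β : Type}

variable (L) in
/-- The tuples `a` and `b` have the same complete type over the empty set. -/
def SameType (a : α → M) (b : α → N) : Prop :=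
  ∀ φ : L.Formula α, φ.Realize a ↔ φ.Realize b

variable (L) in
/-- The tuples `a` and `b` have the same quantifier-free type over the empty set. -/
def SameQFType (a : α → M) (b : α → N) : Prop :=
  ∀ φ : L.Formula α, φ.IsQF → (φ.Realize a ↔ φ.Realize b)

theorem SameType.sameQFType {a : α → M} {b : α → N} (h : SameType L a b) : SameQFType L a b :=
  fun φ _ => h φ

theorem SameType.mem_iff {a b : α → M} (h : SameType L a b) {s : Set (α → M)}
    (hs : (∅ : Set M).Definable L s) : a ∈ s ↔ b ∈ s := by
  obtain ⟨φ, rfl⟩ := Set.empty_definable_iff.1 hs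
  exact h φ

theorem IsIsolating.sameType {Ψ : Set (α → M)} (hΨ : IsIsolating L ∅ Ψ) {a b : α → M}
    (ha : a ∈ Ψ) (hb : b ∈ Ψ) : SameType L a b := by
  intro φ
  have hφ : (∅ : Set M).Definable L {v | φ.Realize v} := Set.empty_definable_iff.2 ⟨φ, rfl⟩
  exact ⟨fun h => hΨ.subset_of_mem hφ ha h hb, fun h => hΨ.subset_of_mem hφ hb h ha⟩

theorem sameQFType_comp_embedding (f : M ↪[L] N) (a : α → M) : SameQFType L a (f ∘ a) :=
  fun φ hφ => by
    rw [Formula.Realize, Formula.Realize, ← hφ.realize_embedding f, Subsingleton.elim (f ∘ default)]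

theorem SameQFType.symm {a : α → M} {b : α → N} (h : SameQFType L a b) : SameQFType L b a :=
  fun φ hφ => (h φ hφ).symm

theorem SameQFType.trans {P : Type} [L.Structure P] {a : α → M} {b : α → N} {c : α → P}
    (hab : SameQFType L a b) (hbc : SameQFType L b c) : SameQFType L a c :=
  fun φ hφ => (hab φ hφ).trans (hbc φ hφ)

theorem SameQFType.comp {a : α → M} {b : α → N} (h : SameQFType L a b) (i : β → α) :
    SameQFType L (a ∘ i) (b ∘ i) := fun φ hφ => by
  simpa only [Formula.realize_relabel] using h (φ.relabel i) (hφ.relabel _)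

theorem HasQE.exists_isQF [Finite α] (hqe : HasQE L M) (φ : L.Formula α) :
    ∃ ψ : L.Formula α, ψ.IsQF ∧ ∀ v : α → M, φ.Realize v ↔ ψ.Realize v := by
  obtain ⟨n, ⟨e⟩⟩ := Finite.exists_equiv_fin α
  obtain ⟨ψ, hψ, hφψ⟩ := hqe n (φ.relabel e)
  refine ⟨ψ.relabel e.symm, hψ.relabel _, fun v => ?_⟩
  rw [Formula.realize_relabel, ← hφψ, Formula.realize_relabel, Function.comp_assoc,
    e.symm_comp_self, Function.comp_id]

theorem SameQFType.sameType [Finite α] (hqe : HasQE L M) {a b : α → M} (h : SameQFType L a b) :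
    SameType L a b := by
  intro φ
  obtain ⟨ψ, hψ, hφψ⟩ := hqe.exists_isQF φ
  exact (hφψ a).trans ((h ψ hψ).trans (hφψ b).symm)

theorem HasQE.exists_isQF_realize_iff_sameQFType {M : Type} [L.Structure M] (hqe : HasQE L M)
    (hM : IsAtomicSet L (Set.univ : Set M)) [Finite α] (a : α → M) :
    ∃ ψ : L.Formula α, ψ.IsQF ∧ ∀ c : α → M, ψ.Realize c ↔ SameQFType L a c := by
  obtain ⟨Ψ, ha, hΨ⟩ := hM a fun _ => trivial
  obtain ⟨φ, rfl⟩ := Set.empty_definable_iff.1 hΨ.definable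
  obtain ⟨ψ, hψ, hφψ⟩ := hqe.exists_isQF φ
  exact ⟨ψ, hψ, fun c => ⟨fun hc => (hΨ.sameType ha ((hφψ c).2 hc)).sameQFType,
    fun hc => (hc ψ hψ).1 ((hφψ a).1 ha)⟩⟩

theorem SameQFType.apply_eq_iff {a : α → M} {b : α → N} (h : SameQFType L a b) (i j : α) :
    a i = a j ↔ b i = b j := by
  simpa using h ((Term.var i).equal (Term.var j)) (BoundedFormula.IsAtomic.equal _ _).isQF

theorem SameQFType.relMap_iff {a : α → M} {b : α → N} (h : SameQFType L a b) {n : ℕ}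
    (R : L.Relations n) (i : Fin n → α) :
    Structure.RelMap R (a ∘ i) ↔ Structure.RelMap R (b ∘ i) := by
  simpa [Function.comp_def] using h (R.formula fun k => Term.var (i k))
    (BoundedFormula.IsAtomic.rel _ _).isQF

theorem SameQFType.exists_embedding [L.IsRelational] {a : α → M} {b : α → N}
    (h : SameQFType L a b) (S : L.Substructure M) (hS : (S : Set M) ⊆ Set.range a) :
    ∃ g : S ↪[L] N, ∀ i (hi : a i ∈ S), g ⟨a i, hi⟩ = b i := by
  choose i hi using fun x : S => hS x.2
  refine ⟨⟨⟨fun x => b (i x), fun x y hxy => ?_⟩, fun f => isEmptyElim f, fun R x => ?_⟩,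
    fun j hj => (h.apply_eq_iff _ _).1 (hi ⟨a j, hj⟩)⟩
  · exact Subtype.ext ((hi x).symm.trans (((h.apply_eq_iff _ _).2 hxy).trans (hi y)))
  · refine (h.relMap_iff R (i ∘ x)).symm.trans ?_
    rw [show a ∘ i ∘ x = Subtype.val ∘ x from funext fun k => hi (x k)]
    rfl

theorem IsAtomicSet.exists_sameType_sumElim (hM : IsAtomicSet L (Set.univ : Set M)) [Finite α]
    {a b : α → M} (h : SameType L a b) (x : M) :
    ∃ y, SameType L (Sum.elim a fun _ : Fin 1 => x) (Sum.elim b fun _ : Fin 1 => y) := by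
  obtain ⟨Ψ, hmem, hΨ⟩ := hM (Sum.elim a fun _ : Fin 1 => x) fun _ => trivial
  obtain ⟨w, hw, rfl⟩ := (h.mem_iff (hΨ.definable.image_comp Sum.inl)).1 ⟨_, hmem, rfl⟩
  refine ⟨w (Sum.inr 0), hΨ.sameType hmem ?_⟩
  convert hw
  ext (i | i)
  · rfl
  · rw [Subsingleton.elim i 0]; rfl

end SameType

section Homogeneous

variable {L : FirstOrder.Language.{0, 0}} [L.IsRelational] {M N : Type} [L.Structure M]
  [L.Structure N] {α : Type}

theorem isExtensionPair_of_forall_exists_sameQFType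
    (h : ∀ (n : ℕ) (a : Fin n → M) (b : Fin n → N), SameQFType L a b → ∀ x : M, ∃ y : N,
      SameQFType L (Sum.elim a fun _ : Fin 1 => x) (Sum.elim b fun _ : Fin 1 => y)) :
    L.IsExtensionPair M N := by
  rw [isExtensionPair_iff_exists_embedding_closure_singleton_sup]
  intro S hS f x
  have := hS.finite
  obtain ⟨n, ⟨e⟩⟩ := Finite.exists_equiv_fin S
  obtain ⟨y, hy⟩ := h n (Subtype.val ∘ e.symm) (f ∘ e.symm)
    ((sameQFType_comp_embedding S.subtype e.symm).symm.trans (sameQFType_comp_embedding f _)) x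
  obtain ⟨g, hg⟩ := hy.exists_embedding (Substructure.closure L {x} ⊔ S) <| by
    have hsup : Substructure.closure L {x} ⊔ S = Substructure.closure L ({x} ∪ S) := by
      rw [Substructure.closure_union, Substructure.closure_eq]
    rw [hsup, Substructure.closure_eq_of_isRelational]
    rintro z (rfl | hz)
    · exact ⟨Sum.inr 0, rfl⟩
    · exact ⟨Sum.inl (e ⟨z, hz⟩), by simp⟩
  refine ⟨g, Embedding.ext fun z => ?_⟩
  have hz := le_sup_right (a := Substructure.closure L {x}) z.2
  simpa using (hg (Sum.inl (e z)) (by simpa using hz)).symm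

theorem isUltrahomogeneous_of_hasQE [Countable M] (hqe : HasQE L M)
    (hM : IsAtomicSet L (Set.univ : Set M)) : L.IsUltrahomogeneous M := by
  rw [isUltrahomogeneous_iff_IsExtensionPair Structure.cg_of_countable]
  refine isExtensionPair_of_forall_exists_sameQFType fun n a b hab x => ?_
  obtain ⟨y, hy⟩ := hM.exists_sameType_sumElim (hab.sameType hqe) x
  exact ⟨y, hy.sameQFType⟩

theorem SameQFType.exists_equiv [Finite α] (hM : L.IsUltrahomogeneous M) {a b : α → M}
    (h : SameQFType L a b) : ∃ e : M ≃[L] M, e ∘ a = b := by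
  let S := Substructure.closure L (Set.range a)
  have hS : (S : Set M) = Set.range a := Substructure.closure_eq_of_isRelational L _
  obtain ⟨f, hf⟩ := h.exists_embedding S hS.subset
  obtain ⟨e, rfl⟩ := hM S ((Substructure.fg_def).2 ⟨_, Set.finite_range a, rfl⟩) f
  exact ⟨e, funext fun i => hf i (hS.superset ⟨i, rfl⟩)⟩

end Homogeneous

section Orbit

variable {L : FirstOrder.Language.{0, 0}} {M : Type} [L.Structure M] {α : Type}

variable (L) in
/-- The orbit of the tuple `a` under the automorphism group. -/
def orbit (a : α → M) : Set (α → M) :=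
  Set.range fun e : M ≃[L] M => e ∘ a

theorem mem_orbit_self (a : α → M) : a ∈ orbit L a :=
  ⟨.refl L M, rfl⟩

theorem IsIsolating.eq_orbit [L.IsRelational] [Finite α] (hM : L.IsUltrahomogeneous M)
    {Ψ : Set (α → M)} (hΨ : IsIsolating L ∅ Ψ) {a : α → M} (ha : a ∈ Ψ) : Ψ = orbit L a := by
  refine Set.Subset.antisymm (fun b hb => (hΨ.sameType ha hb).sameQFType.exists_equiv hM) ?_
  rintro _ ⟨e, rfl⟩
  obtain ⟨φ, rfl⟩ := Set.empty_definable_iff.1 hΨ.definable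
  exact (StrongHomClass.realize_formula e φ).2 ha

theorem definable_orbit [L.IsRelational] [Finite α] (hM : L.IsUltrahomogeneous M)
    (hatomic : IsAtomicSet L (Set.univ : Set M)) (a : α → M) :
    (∅ : Set M).Definable L (orbit L a) := by
  obtain ⟨Ψ, ha, hΨ⟩ := hatomic a fun _ => trivial
  exact hΨ.eq_orbit hM ha ▸ hΨ.definable

theorem orbit_eq_of_mem {a b : α → M} (h : b ∈ orbit L a) : orbit L b = orbit L a := by
  obtain ⟨e, rfl⟩ := h
  ext c
  constructor
  · rintro ⟨f, rfl⟩
    exact ⟨f.comp e, rfl⟩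
  · rintro ⟨f, rfl⟩
    exact ⟨f.comp e.symm, funext fun i => congrArg f (e.symm_apply_apply (a i))⟩

theorem exists_sameType_of_categorical [Countable L.Symbols] [Countable M] [Infinite M] {N : Type}
    [L.Structure N] (hcat : (Cardinal.aleph0.{0}).Categorical (L.completeTheory M))
    (hN : N ≅[L] M) [Countable α] (t : α → N) : ∃ u : α → M, SameType L t u := by
  have : Infinite N := hN.infinite_iff.2 ‹_›
  obtain ⟨S, hS, hcard⟩ := exists_elementarySubstructure_mk_eq (L := L) le_rfl
    (Set.countable_range t).le_aleph0 (Cardinal.aleph0_le_mk N)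
  have : Infinite S := S.elementarilyEquivalent.infinite_iff.2 ‹_›
  obtain ⟨e⟩ := nonempty_equiv_of_categorical hcat (S.elementarilyEquivalent.trans hN)
    (rfl : M ≅[L] M) hcard (Cardinal.mk_eq_aleph0 M)
  let t' (i : α) : S := ⟨t i, hS ⟨i, rfl⟩⟩
  exact ⟨e ∘ t', fun φ => (S.subtype.map_formula φ t').trans
    (StrongHomClass.realize_formula e φ).symm⟩

theorem finite_range_orbit [Countable L.Symbols] [Countable M] [Infinite M] [Countable α]
    (hcat : (Cardinal.aleph0.{0}).Categorical (L.completeTheory M))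
    (horbit : ∀ a : α → M, (∅ : Set M).Definable L (orbit L a)) :
    (Set.range (orbit L : (α → M) → Set (α → M))).Finite := by
  by_contra hinf
  have : Infinite (Set.range (orbit L : (α → M) → Set (α → M))) := Set.infinite_coe_iff.2 hinf
  choose rep hrep using fun o : Set.range (orbit L : (α → M) → Set (α → M)) => o.2
  let V := Filter.hyperfilter (Set.range (orbit L : (α → M) → Set (α → M)))
  obtain ⟨u, hu⟩ := exists_sameType_of_categorical hcat
    (Ultrapower.elementarilyEquivalent V) fun i => Ultrapower.mk V fun o => rep o i
  obtain ⟨φ, hφ⟩ := Set.empty_definable_iff.1 (horbit u)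
  have hmem (c : α → M) : φ.Realize c ↔ c ∈ orbit L u := (Set.ext_iff.1 hφ c).symm
  have hV : ∀ᶠ o in V, rep o ∈ orbit L u := by
    simpa only [hmem] using
      (Ultrapower.realize_mk V φ _).1 ((hu φ).2 ((hmem u).2 (mem_orbit_self u)))
  refine (Set.finite_singleton (⟨_, u, rfl⟩ : Set.range (orbit L))).notMem_hyperfilter
    (Filter.mem_of_superset hV fun o ho => Subtype.ext ?_)
  rw [← hrep o, orbit_eq_of_mem ho]

end Orbit

/-! ### Algebraic closure -/

section Acl

variable {L : FirstOrder.Language.{0, 0}} {M : Type} [L.Structure M] {A B C : Set M} {b : M}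

local notation "acl" => aclSet L M

theorem aclSet_mono (h : A ⊆ B) : acl A ⊆ acl B := by
  rintro b ⟨k, φ, a, ha, hb, hfin⟩
  exact ⟨k, φ, a, fun i => h (ha i), hb, hfin⟩

theorem subset_aclSet (A : Set M) : A ⊆ acl A := by
  intro b hb
  refine ⟨1, (Term.var (Sum.inl 0)).equal (Term.var (Sum.inr 0)), fun _ => b, fun _ => hb, ?_, ?_⟩
  · simp
  · simp

theorem exists_finite_subset_mem_aclSet (h : b ∈ acl A) : ∃ F ⊆ A, F.Finite ∧ b ∈ acl F := by
  obtain ⟨k, φ, a, ha, hb, hfin⟩ := h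
  exact ⟨Set.range a, Set.range_subset_iff.2 ha, Set.finite_range a, k, φ, a,
    fun i => ⟨i, rfl⟩, hb, hfin⟩

theorem realize_sumElim_comp_equiv {k : ℕ} (e : M ≃[L] M) (φ : L.Formula (Fin k ⊕ Fin 1))
    (a : Fin k → M) (c : M) :
    φ.Realize (Sum.elim (e ∘ a) fun _ => e c) ↔ φ.Realize (Sum.elim a fun _ => c) := by
  rw [← StrongHomClass.realize_formula e φ (v := Sum.elim a fun _ => c), Sum.comp_elim]
  rfl

theorem setOf_realize_sumElim_comp_equiv {k : ℕ} (e : M ≃[L] M) (φ : L.Formula (Fin k ⊕ Fin 1))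
    (a : Fin k → M) :
    {c | φ.Realize (Sum.elim (e ∘ a) fun _ => c)} =
      e '' {c | φ.Realize (Sum.elim a fun _ => c)} := by
  ext c
  obtain ⟨c, rfl⟩ := e.surjective c
  simp only [Set.mem_ofPred_eq, e.injective.mem_set_image, realize_sumElim_comp_equiv]

theorem apply_mem_aclSet_image (e : M ≃[L] M) (h : b ∈ acl A) : e b ∈ acl (e '' A) := by
  obtain ⟨k, φ, a, ha, hb, hfin⟩ := h
  refine ⟨k, φ, e ∘ a, fun i => Set.mem_image_of_mem e (ha i),
    (realize_sumElim_comp_equiv e φ a b).2 hb, ?_⟩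
  rw [setOf_realize_sumElim_comp_equiv]
  exact hfin.image e

theorem apply_mem_aclSet_image_iff (e : M ≃[L] M) : e b ∈ acl (e '' A) ↔ b ∈ acl A := by
  refine ⟨fun h => ?_, apply_mem_aclSet_image e⟩
  simpa [Set.image_image] using apply_mem_aclSet_image e.symm h

theorem image_aclSet (e : M ≃[L] M) (A : Set M) : e '' acl A = acl (e '' A) := by
  ext b
  obtain ⟨b, rfl⟩ := e.surjective b
  rw [e.injective.mem_set_image, apply_mem_aclSet_image_iff]

theorem eqOn_id_symm {e : M ≃[L] M} (he : Set.EqOn e id C) : Set.EqOn e.symm id C :=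
  fun c hc => (congrArg e.symm (he hc)).symm.trans (e.symm_apply_apply c)

theorem eqOn_id_comp {e f : M ≃[L] M} (hf : Set.EqOn f id C) (he : Set.EqOn e id C) :
    Set.EqOn (f.comp e) id C :=
  fun _ hc => (congrArg f (he hc)).trans (hf hc)

theorem definable₁_setOf_sumElim_mem {β : Type} {S : Set (β ⊕ Fin 1 → M)}
    (hS : (∅ : Set M).Definable L S) {w : β → M} (hw : ∀ b, w b ∈ A) :
    A.Definable₁ L {y | Sum.elim w (fun _ => y) ∈ S} := by
  refine (congrArg (A.Definable L) (Set.ext fun z => ?_)).mp (definable_setOf_sumElim_mem hS hw)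
  rw [Set.mem_ofPred_eq, Set.mem_ofPred_eq, Set.mem_ofPred_eq,
    show (fun _ => z 0) = z from funext fun i => congrArg z (Subsingleton.elim 0 i)]

variable (L) in
/-- The orbit of `b` under the automorphisms fixing `C` pointwise. -/
def orbitOver (C : Set M) (b : M) : Set M :=
  {b' | ∃ e : M ≃[L] M, Set.EqOn e id C ∧ e b = b'}

theorem mem_orbitOver_self (C : Set M) (b : M) : b ∈ orbitOver L C b :=
  ⟨.refl L M, fun _ _ => rfl, rfl⟩

theorem mem_orbitOver_of_mem_of_mem {b b' d : M} (h : d ∈ orbitOver L C b)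
    (h' : d ∈ orbitOver L C b') : b' ∈ orbitOver L C b := by
  obtain ⟨e, he, rfl⟩ := h
  obtain ⟨f, hf, hfe⟩ := h'
  exact ⟨f.symm.comp e, eqOn_id_comp (eqOn_id_symm hf) he,
    (congrArg f.symm hfe).symm.trans (f.symm_apply_apply b')⟩

theorem finite_orbitOver (h : b ∈ acl C) : (orbitOver L C b).Finite := by
  obtain ⟨k, φ, a, ha, hb, hfin⟩ := h
  refine hfin.subset ?_
  rintro _ ⟨e, he, rfl⟩
  have hea : e ∘ a = a := funext fun i => he (ha i)
  exact hea ▸ (realize_sumElim_comp_equiv e φ a b).2 hb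

theorem sumElim_mem_orbit_iff {k : ℕ} {c : Fin k → M} {b b' : M} :
    Sum.elim c (fun _ : Fin 1 => b') ∈ orbit L (Sum.elim c fun _ : Fin 1 => b) ↔
      b' ∈ orbitOver L (Set.range c) b := by
  refine exists_congr fun e => ?_
  simp [funext_iff, Set.EqOn]

end Acl

variable {L : FirstOrder.Language.{0, 0}} {M : Type} [L.Structure M]

variable (L M) in
/-- The conclusion of the Ryll-Nardzewski theorem: on tuples of each finite length there are only
finitely many orbits of automorphisms, and each of them is `∅`-definable. -/
structure IsOligomorphic : Prop where
  definable_orbit : ∀ (α : Type) [Finite α] (a : α → M), (∅ : Set M).Definable L (orbit L a)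
  finite_range_orbit : ∀ (α : Type) [Finite α],
    (Set.range (orbit L : (α → M) → Set (α → M))).Finite

section Oligomorphic

variable {A B C : Set M} {b : M}

local notation "acl" => aclSet L M

theorem IsOligomorphic.definable_orbitOver (hM : IsOligomorphic L M) (hC : C.Finite) (b : M) :
    C.Definable₁ L (orbitOver L C b) := by
  obtain ⟨k, c, -, rfl⟩ := hC.fin_param
  simpa only [sumElim_mem_orbit_iff, Set.ofPred_mem_eq] using definable₁_setOf_sumElim_mem
    (hM.definable_orbit _ (Sum.elim c fun _ : Fin 1 => b)) (Set.mem_range_self (f := c))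

theorem IsOligomorphic.mem_aclSet_iff (hM : IsOligomorphic L M) (hC : C.Finite) :
    b ∈ acl C ↔ (orbitOver L C b).Finite := by
  refine ⟨finite_orbitOver, fun h => ?_⟩
  obtain ⟨k, c, -, rfl⟩ := hC.fin_param
  obtain ⟨φ, hφ⟩ := Set.empty_definable_iff.1
    (hM.definable_orbit _ (Sum.elim c fun _ : Fin 1 => b))
  have hmem (b' : M) :
      φ.Realize (Sum.elim c fun _ => b') ↔ b' ∈ orbitOver L (Set.range c) b := by
    rw [← sumElim_mem_orbit_iff, hφ]
    rfl
  exact ⟨k, φ, c, fun i => ⟨i, rfl⟩, (hmem b).2 (mem_orbitOver_self _ b),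
    h.subset fun b' hb' => (hmem b').1 hb'⟩

theorem IsOligomorphic.finite_aclSet (hM : IsOligomorphic L M) (hC : C.Finite) :
    (acl C).Finite := by
  obtain ⟨k, c, -, rfl⟩ := hC.fin_param
  refine Set.Finite.of_finite_fibers (fun b => orbit L (Sum.elim c fun _ : Fin 1 => b))
    ((hM.finite_range_orbit (Fin k ⊕ Fin 1)).subset ?_) ?_
  · rintro _ ⟨b, -, rfl⟩
    exact ⟨_, rfl⟩
  · rintro _ ⟨b, hb, rfl⟩
    refine (finite_orbitOver hb).subset fun b' hb' => ?_
    have heq : orbit L (Sum.elim c fun _ : Fin 1 => b') =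
      orbit L (Sum.elim c fun _ : Fin 1 => b) := hb'.2
    exact sumElim_mem_orbit_iff.1 (heq ▸ mem_orbit_self _)

theorem IsOligomorphic.aclSet_aclSet_subset (hM : IsOligomorphic L M) (A : Set M) :
    acl (acl A) ⊆ acl A := by
  intro b hb
  obtain ⟨F, hFA, hF, hb⟩ := exists_finite_subset_mem_aclSet hb
  choose! G hGA hG hxG using fun x (hx : x ∈ F) => exists_finite_subset_mem_aclSet (hFA hx)
  let C := ⋃ x ∈ F, G x
  have hC : C.Finite := hF.biUnion hG
  have hFC : F ⊆ acl C := fun x hx => aclSet_mono (Set.subset_biUnion_of_mem hx) (hxG x hx)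
  suffices b ∈ acl C from aclSet_mono (Set.iUnion₂_subset hGA) this
  rw [hM.mem_aclSet_iff hC]
  refine (hM.finite_aclSet (hM.finite_aclSet hC)).subset ?_
  rintro _ ⟨e, he, rfl⟩
  have heC : e '' acl C = acl C := by rw [image_aclSet, he.image_eq_self]
  exact heC ▸ apply_mem_aclSet_image e (aclSet_mono hFC hb)

theorem IsOligomorphic.aclSet_subset (hM : IsOligomorphic L M) (h : A ⊆ acl B) :
    acl A ⊆ acl B :=
  (aclSet_mono h).trans (hM.aclSet_aclSet_subset B)

end Oligomorphic

variable (L) in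
/-- `D` is strongly minimal and definable without parameters. -/
structure IsStronglyMinimal (D : Set M) : Prop where
  definable : (∅ : Set M).Definable₁ L D
  stronglyMinimalSet : StronglyMinimalSet L M D

section StronglyMinimal

variable {D C : Set M} {a b a' b' : M}

local notation "acl" => aclSet L M

theorem IsStronglyMinimal.apply_mem_iff (hD : IsStronglyMinimal L D) (e : M ≃[L] M) :
    e b ∈ D ↔ b ∈ D := by
  obtain ⟨φ, hφ⟩ := Set.empty_definable_iff.1 hD.definable
  have hmem (b : M) : b ∈ D ↔ φ.Realize fun _ => b := Set.ext_iff.1 hφ fun _ => b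
  rw [hmem, hmem]
  exact StrongHomClass.realize_formula e φ (v := fun _ => b)

theorem IsStronglyMinimal.image_eq (hD : IsStronglyMinimal L D) (e : M ≃[L] M) : e '' D = D := by
  ext b
  obtain ⟨b, rfl⟩ := e.surjective b
  rw [e.injective.mem_set_image, hD.apply_mem_iff]

theorem IsStronglyMinimal.finite_diff_orbitOver (hD : IsStronglyMinimal L D)
    (hM : IsOligomorphic L M) (hC : C.Finite) (hb : b ∈ D) (hbC : b ∉ acl C) :
    (D \ orbitOver L C b).Finite := by
  refine (hD.stronglyMinimalSet.2 _ ((hM.definable_orbitOver hC b).mono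
    (Set.subset_univ C))).resolve_left fun hfin => hbC ?_
  refine (hM.mem_aclSet_iff hC).2 (hfin.subset ?_)
  rintro _ ⟨e, he, rfl⟩
  exact ⟨⟨e, he, rfl⟩, (hD.apply_mem_iff e).2 hb⟩

theorem IsStronglyMinimal.mem_orbitOver (hD : IsStronglyMinimal L D) (hM : IsOligomorphic L M)
    (hC : C.Finite) (hb : b ∈ D) (hbC : b ∉ acl C) (hb' : b' ∈ D) (hbC' : b' ∉ acl C) :
    b' ∈ orbitOver L C b := by
  have hfin := (hD.finite_diff_orbitOver hM hC hb hbC).union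
    (hD.finite_diff_orbitOver hM hC hb' hbC')
  obtain ⟨d, hd, hdn⟩ := (hD.stronglyMinimalSet.1.sdiff hfin).nonempty
  rw [← Set.sdiff_inter] at hdn
  obtain ⟨hdb, hdb'⟩ : d ∈ orbitOver L C b ∩ orbitOver L C b' :=
    not_not.1 fun h => hdn ⟨hd, h⟩
  exact mem_orbitOver_of_mem_of_mem hdb hdb'

theorem IsStronglyMinimal.exists_notMem_aclSet (hD : IsStronglyMinimal L D)
    (hM : IsOligomorphic L M) (hC : C.Finite) : ∃ b ∈ D, b ∉ acl C :=
  (hD.stronglyMinimalSet.1.sdiff (hM.finite_aclSet hC)).nonempty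

theorem IsStronglyMinimal.exists_equiv_pair (hD : IsStronglyMinimal L D) (hM : IsOligomorphic L M)
    (hC : C.Finite) (ha : a ∈ D) (haC : a ∉ acl C) (hb : b ∈ D) (hba : b ∉ acl (insert a C))
    (ha' : a' ∈ D) (haC' : a' ∉ acl C) (hb' : b' ∈ D) (hba' : b' ∉ acl (insert a' C)) :
    ∃ e : M ≃[L] M, Set.EqOn e id C ∧ e a = a' ∧ e b = b' := by
  obtain ⟨f, hf, rfl⟩ := hD.mem_orbitOver hM hC ha haC ha' haC'
  have hfb : f b ∉ acl (insert (f a) C) := by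
    rw [← hf.image_eq_self, ← Set.image_insert_eq, apply_mem_aclSet_image_iff]
    exact hba
  obtain ⟨g, hg, rfl⟩ := hD.mem_orbitOver hM (hC.insert _) ((hD.apply_mem_iff f).2 hb) hfb hb' hba'
  exact ⟨g.comp f, eqOn_id_comp (hg.mono (Set.subset_insert _ _)) hf,
    hg (Set.mem_insert _ _), rfl⟩

/-- If `b ∉ acl (insert a C)`, then `acl (insert b' C)` contains every point generic over `C` over
which `b'` is generic, while its size does not depend on `b'`. -/
theorem IsStronglyMinimal.exchange (hD : IsStronglyMinimal L D) (hM : IsOligomorphic L M)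
    (hC : C.Finite) (ha : a ∈ D) (hb : b ∈ D) (hab : a ∈ acl (insert b C)) (haC : a ∉ acl C) :
    b ∈ acl (insert a C) := by
  by_contra hba
  have himage {e : M ≃[L] M} (he : Set.EqOn e id C) :
      e '' acl (insert b C) = acl (insert (e b) C) := by
    rw [image_aclSet, Set.image_insert_eq, he.image_eq_self]
  obtain ⟨S, hSD, hS, hScard⟩ := (hD.stronglyMinimalSet.1.sdiff
    (hM.finite_aclSet hC)).exists_subset_ncard_eq ((acl (insert b C)).ncard + 1)
  obtain ⟨b', hb', hb'S⟩ := hD.exists_notMem_aclSet hM (hC.union hS)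
  have hSb' : S ⊆ acl (insert b' C) := by
    intro x hx
    obtain ⟨e, he, rfl, rfl⟩ := hD.exists_equiv_pair hM hC ha haC hb hba (hSD hx).1 (hSD hx).2 hb'
      fun h => hb'S (aclSet_mono (Set.insert_subset (.inr hx) Set.subset_union_left) h)
    exact himage he ▸ Set.mem_image_of_mem e hab
  obtain ⟨e, he, rfl⟩ := hD.mem_orbitOver hM hC hb
    (fun h => hba (aclSet_mono (Set.subset_insert _ _) h)) hb'
    fun h => hb'S (aclSet_mono Set.subset_union_left h)
  have hle := Set.ncard_le_ncard hSb' (hM.finite_aclSet (hC.insert _))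
  rw [← himage he, Set.ncard_image_of_injective _ e.injective, hScard] at hle
  lia

theorem IsStronglyMinimal.exists_encard_le (hD : IsStronglyMinimal L D) {k : ℕ}
    (φ : L.Formula (Fin k ⊕ Fin 1)) (z : Fin k → M) :
    ∃ m : ℕ, ({y | φ.Realize (Sum.elim z fun _ => y)} ∩ D).encard ≤ m ∨
      (D \ {y | φ.Realize (Sum.elim z fun _ => y)}).encard ≤ m := by
  have hdef : (Set.univ : Set M).Definable₁ L {y | φ.Realize (Sum.elim z fun _ => y)} :=
    definable₁_setOf_sumElim_mem (Set.empty_definable_iff.2 ⟨φ, rfl⟩) fun i => Set.mem_univ (z i)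
  rcases hD.stronglyMinimalSet.2 _ hdef with h | h
  · exact ⟨_, .inl h.cast_ncard_eq.ge⟩
  · exact ⟨_, .inr h.cast_ncard_eq.ge⟩

theorem IsStronglyMinimal.exists_forall_encard_le (hD : IsStronglyMinimal L D)
    (hM : IsOligomorphic L M) {k : ℕ} (φ : L.Formula (Fin k ⊕ Fin 1)) :
    ∃ m : ℕ, ∀ z : Fin k → M, ({y | φ.Realize (Sum.elim z fun _ => y)} ∩ D).encard ≤ m ∨
      (D \ {y | φ.Realize (Sum.elim z fun _ => y)}).encard ≤ m := by
  have := (hM.finite_range_orbit (Fin k)).to_subtype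
  choose rep hrep using fun o : Set.range (orbit L : (Fin k → M) → _) => o.2
  choose m hm using fun o => hD.exists_encard_le φ (rep o)
  obtain ⟨B, hB⟩ := (Set.finite_range m).bddAbove
  refine ⟨B, fun z => ?_⟩
  let o : Set.range (orbit L : (Fin k → M) → _) := ⟨_, z, rfl⟩
  obtain ⟨e, he⟩ : z ∈ orbit L (rep o) := hrep o ▸ mem_orbit_self z
  have hle : (m o : ℕ∞) ≤ B := by exact_mod_cast hB ⟨o, rfl⟩
  rw [← show e ∘ rep o = z from he, setOf_realize_sumElim_comp_equiv, ← hD.image_eq e,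
    ← Set.image_inter e.injective, ← Set.image_sdiff e.injective, e.injective.encard_image,
    e.injective.encard_image]
  exact (hm o).imp hle.trans' hle.trans'

end StronglyMinimal

/-! ### Independence in a modular strongly minimal set -/

variable {L : FirstOrder.Language.{0, 0}} {M : Type} [L.Structure M]

section Entries

variable {α β : Type*} {b r : ℕ → List α}

/-- The set of entries of a list. -/
def entries (l : List α) : Set α :=
  {x | x ∈ l}

theorem finite_entries (l : List α) : (entries l).Finite :=
  List.finite_toSet l

theorem entries_nil : entries ([] : List α) = ∅ := by
  ext; simp [entries]

theorem entries_cons (x : α) (l : List α) : entries (x :: l) = insert x (entries l) := by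
  ext; simp [entries]

theorem entries_append (l l' : List α) : entries (l ++ l') = entries l ∪ entries l' := by
  ext; simp [entries]

theorem entries_map (f : α → β) (l : List α) : entries (l.map f) = f '' entries l := by
  ext; simp [entries]

/-- The concatenation `b (k - 1) ++ ⋯ ++ b 0` of the first `k` blocks. -/
def concatBlocks (b : ℕ → List α) : ℕ → List α
  | 0 => []
  | k + 1 => b k ++ concatBlocks b k

theorem length_concatBlocks {n : ℕ} (hb : ∀ k, (b k).length = n) (k : ℕ) :
    (concatBlocks b k).length = k * n := by
  induction k with
  | zero => simp [concatBlocks]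
  | succ k ih => simp [concatBlocks, ih, hb]; ring

theorem map_eq_of_map_concatBlocks_eq {f : α → α} (hbr : ∀ k, (b k).length = (r k).length) :
    ∀ {k : ℕ}, (concatBlocks b k).map f = concatBlocks r k → ∀ i < k, (b i).map f = r i
  | 0, _, i, hi => absurd hi i.not_lt_zero
  | k + 1, h, i, hi => by
    rw [concatBlocks, concatBlocks, List.map_append] at h
    obtain ⟨hk, hlt⟩ := List.append_inj h (by rw [List.length_map, hbr])
    rcases Nat.lt_succ_iff_lt_or_eq.1 hi with hi | rfl
    · exact map_eq_of_map_concatBlocks_eq hbr hlt i hi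
    · exact hk

end Entries

variable (L) in
/-- The entries of the list lie in `D` and are algebraically independent over `C`: none of them is
algebraic over `C` and the later ones. -/
def IsIndependent (D C : Set M) : List M → Prop
  | [] => True
  | x :: l => x ∈ D ∧ x ∉ aclSet L M (C ∪ entries l) ∧ IsIndependent D C l

section Independent

variable {D C C' : Set M} {l l' : List M}

local notation "acl" => aclSet L M

theorem IsIndependent.entries_subset : ∀ {l : List M}, IsIndependent L D C l → entries l ⊆ D
  | [], _ => by rw [entries_nil]; exact Set.empty_subset _
  | x :: l, h => by
    rw [entries_cons]
    exact Set.insert_subset h.1 h.2.2.entries_subset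

theorem IsIndependent.map (hD : IsStronglyMinimal L D) {e : M ≃[L] M} (he : Set.EqOn e id C) :
    ∀ {l : List M}, IsIndependent L D C l → IsIndependent L D C (l.map e)
  | [], _ => trivial
  | x :: l, h => by
    refine ⟨(hD.apply_mem_iff e).2 h.1, ?_, h.2.2.map hD he⟩
    rw [entries_map, ← he.image_eq_self, ← Set.image_union, apply_mem_aclSet_image_iff]
    exact h.2.1

theorem isIndependent_append (l' : List M) : ∀ {l : List M}, IsIndependent L D C (l ++ l') ↔
    IsIndependent L D (C ∪ entries l') l ∧ IsIndependent L D C l'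
  | [] => by simp [IsIndependent]
  | x :: l => by
    simp only [List.cons_append, IsIndependent, isIndependent_append l', entries_append,
      Set.union_comm (entries l), Set.union_assoc, and_assoc]

theorem IsIndependent.mono (hM : IsOligomorphic L M) (hC : C' ⊆ acl C) :
    ∀ {l : List M}, IsIndependent L D C l → IsIndependent L D C' l
  | [], _ => trivial
  | x :: l, h => by
    refine ⟨h.1, fun hx => h.2.1 (hM.aclSet_subset ?_ hx), h.2.2.mono hM hC⟩
    exact Set.union_subset (hC.trans (aclSet_mono Set.subset_union_left))
      (Set.subset_union_right.trans (subset_aclSet _))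

theorem IsStronglyMinimal.exists_map_eq_of_isIndependent (hD : IsStronglyMinimal L D)
    (hM : IsOligomorphic L M) (hC : C.Finite) : ∀ {l l' : List M}, IsIndependent L D C l →
      IsIndependent L D C l' → l.length = l'.length →
      ∃ e : M ≃[L] M, Set.EqOn e id C ∧ l.map e = l'
  | [], [], _, _, _ => ⟨.refl L M, fun _ _ => rfl, rfl⟩
  | x :: l, x' :: l', h, h', hlen => by
    obtain ⟨e, he, hel⟩ :=
      hD.exists_map_eq_of_isIndependent hM hC h.2.2 h'.2.2 (by simpa using hlen)
    have hex := h.map hD he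
    rw [List.map_cons, hel] at hex
    obtain ⟨f, hf, hfx⟩ :=
      hD.mem_orbitOver hM (hC.union (finite_entries l')) hex.1 hex.2.1 h'.1 h'.2.1
    refine ⟨f.comp e, eqOn_id_comp (hf.mono Set.subset_union_left) he, ?_⟩
    rw [List.map_cons, show ⇑(f.comp e) = f ∘ e from rfl, ← List.map_map, hel]
    exact congrArg₂ _ hfx ((List.map_congr_left fun y hy => hf (.inr hy)).trans (List.map_id l'))

theorem IsStronglyMinimal.exists_isIndependent (hD : IsStronglyMinimal L D)
    (hM : IsOligomorphic L M) (hC : C.Finite) : ∀ n, ∃ l, l.length = n ∧ IsIndependent L D C l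
  | 0 => ⟨[], rfl, trivial⟩
  | n + 1 => by
    obtain ⟨l, rfl, hl⟩ := hD.exists_isIndependent hM hC n
    obtain ⟨b, hb, hbl⟩ := hD.exists_notMem_aclSet hM (hC.union (finite_entries l))
    exact ⟨b :: l, rfl, hb, hbl, hl⟩

theorem exists_isIndependent_subset (C : Set M) : ∀ l : List M, entries l ⊆ D →
    ∃ l', entries l' ⊆ entries l ∧ IsIndependent L D C l' ∧ entries l ⊆ acl (C ∪ entries l')
  | [], _ => ⟨[], subset_rfl, trivial, by rw [entries_nil]; exact Set.empty_subset _⟩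
  | x :: l, h => by
    rw [entries_cons] at h ⊢
    obtain ⟨l', hsub, hl', hspan⟩ :=
      exists_isIndependent_subset C l ((Set.subset_insert _ _).trans h)
    by_cases hx : x ∈ acl (C ∪ entries l')
    · exact ⟨l', hsub.trans (Set.subset_insert _ _), hl', Set.insert_subset hx hspan⟩
    · refine ⟨x :: l', ?_, ⟨h (Set.mem_insert _ _), hx, hl'⟩, ?_⟩ <;> rw [entries_cons]
      · exact Set.insert_subset_insert hsub
      · exact Set.insert_subset (subset_aclSet _ (.inr (Set.mem_insert _ _)))
          (hspan.trans (aclSet_mono (Set.union_subset_union_right _ (Set.subset_insert _ _))))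

theorem IsStronglyMinimal.mem_aclSet_of_isIndependent (hD : IsStronglyMinimal L D)
    (hM : IsOligomorphic L M) {Z : Set M} (hC : C.Finite) {p : M} (hp : p ∈ D)
    (hpZ : p ∈ acl (C ∪ Z)) :
    ∀ {l : List M}, IsIndependent L D (C ∪ Z) l → p ∈ acl (C ∪ entries l) → p ∈ acl C
  | [], _, h => by rwa [entries_nil, Set.union_empty] at h
  | x :: l, hl, h => by
    by_cases hpl : p ∈ acl (C ∪ entries l)
    · exact hD.mem_aclSet_of_isIndependent hM hC hp hpZ hl.2.2 hpl
    · rw [entries_cons, Set.union_insert] at h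
      refine absurd (hM.aclSet_subset ?_
        (hD.exchange hM (hC.union (finite_entries l)) hp hl.1 h hpl)) hl.2.1
      exact Set.insert_subset (aclSet_mono Set.subset_union_left hpZ)
        ((Set.union_subset_union_left _ Set.subset_union_left).trans (subset_aclSet _))

theorem IsOligomorphic.isAclClosedIn (hM : IsOligomorphic L M) (D A : Set M) :
    IsAclClosedIn L M D (acl A ∩ D) :=
  ⟨Set.inter_subset_right, Set.Subset.antisymm
    (Set.inter_subset_inter_left _ (hM.aclSet_subset Set.inter_subset_left))
    (Set.subset_inter (subset_aclSet _) Set.inter_subset_right)⟩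

end Independent

section Modular

variable {D C : Set M} {X : List M} {d : M}

local notation "acl" => aclSet L M

theorem notMem_aclSet_of_modular (hD : IsStronglyMinimal L D) (hM : IsOligomorphic L M)
    (hmod : ModularGeometryOn L M D) {Z : Set M} (hC : C.Finite) (hZ : Z ⊆ D)
    (hX : IsIndependent L D (C ∪ Z) X) (hd : d ∈ D) (hdC : d ∈ acl (C ∪ entries X))
    (hdX : d ∉ acl (acl C ∩ D ∪ entries X)) : d ∉ acl (acl C ∩ D ∪ Z ∪ entries X) := by
  intro hdZ
  set Y := acl C ∩ D
  have hYC (B : Set M) : Y ⊆ acl (C ∪ B) :=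
    Set.inter_subset_left.trans (aclSet_mono Set.subset_union_left)
  have hmodular := hmod (acl (Y ∪ entries X) ∩ D) (acl (Y ∪ Z) ∩ D)
    (acl (Y ∪ insert d (entries X)) ∩ D)
    (hM.isAclClosedIn _ _) (hM.isAclClosedIn _ _) (hM.isAclClosedIn _ _)
    (Set.inter_subset_inter_left _
      (aclSet_mono (Set.union_subset_union_right _ (Set.subset_insert _ _))))
  have hdmem : d ∈ acl (acl (Y ∪ entries X) ∩ D ∪ acl (Y ∪ Z) ∩ D) ∩ D ∩
      (acl (Y ∪ insert d (entries X)) ∩ D) := by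
    refine ⟨⟨aclSet_mono ?_ hdZ, hd⟩, subset_aclSet _ (.inr (Set.mem_insert _ _)), hd⟩
    rintro x ((hx | hx) | hx)
    · exact .inl ⟨subset_aclSet _ (.inl hx), hx.2⟩
    · exact .inr ⟨subset_aclSet _ (.inr hx), hZ hx⟩
    · exact .inl ⟨subset_aclSet _ (.inr hx), hX.entries_subset hx⟩
  rw [← hmodular] at hdmem
  refine hdX (hM.aclSet_subset ?_ hdmem.1)
  rintro p (hp | ⟨⟨hpZ, hpD⟩, hpX, -⟩)
  · exact hp.1
  refine subset_aclSet _ (.inl ⟨hD.mem_aclSet_of_isIndependent hM hC hpD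
    (hM.aclSet_subset ?_ hpZ) hX (hM.aclSet_subset ?_ hpX), hpD⟩)
  · exact Set.union_subset (hYC Z) (Set.subset_union_right.trans (subset_aclSet _))
  · exact Set.union_subset (hYC _)
      (Set.insert_subset hdC (Set.subset_union_right.trans (subset_aclSet _)))

theorem exists_isIndependent_map_append (hD : IsStronglyMinimal L D) (hM : IsOligomorphic L M)
    (hmod : ModularGeometryOn L M D) (hC : C.Finite) (hX : IsIndependent L D C X) (hd : d ∈ D)
    (hdC : d ∈ acl (C ∪ entries X)) (hdX : d ∉ acl (acl C ∩ D ∪ entries X)) {q : List M}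
    (hq : IsIndependent L D (acl C ∩ D) q) :
    ∃ g : M ≃[L] M, Set.EqOn g id C ∧ IsIndependent L D (acl C ∩ D) ((d :: X).map g ++ q) := by
  obtain ⟨X', hlen, hX'⟩ := hD.exists_isIndependent hM (hC.union (finite_entries q)) X.length
  obtain ⟨g, hg, rfl⟩ := hD.exists_map_eq_of_isIndependent hM hC hX
    (hX'.mono hM (Set.subset_union_left.trans (subset_aclSet _))) hlen.symm
  have hgY : g '' (acl C ∩ D) = acl C ∩ D := by
    rw [Set.image_inter g.injective, image_aclSet, hg.image_eq_self, hD.image_eq]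
  refine ⟨g, hg, (isIndependent_append q).2 ⟨⟨(hD.apply_mem_iff g).2 hd, ?_, hX'.mono hM ?_⟩, hq⟩⟩
  · refine notMem_aclSet_of_modular hD hM hmod hC hq.entries_subset hX'
      ((hD.apply_mem_iff g).2 hd) ?_ ?_
    · rwa [← hg.image_eq_self, entries_map, ← Set.image_union, apply_mem_aclSet_image_iff]
    · rwa [← hgY, entries_map, ← Set.image_union, apply_mem_aclSet_image_iff]
  · exact Set.union_subset (Set.inter_subset_left.trans (aclSet_mono Set.subset_union_left))
      (Set.subset_union_right.trans (subset_aclSet _))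

theorem exists_isIndependent_append_forall_map_ne (hD : IsStronglyMinimal L D)
    (hM : IsOligomorphic L M) (hC : C.Finite) (hdC : d ∈ acl (C ∪ entries X)) {q : List M}
    (hq : IsIndependent L D (acl C ∩ D) q) :
    ∃ b : List M, b.length = (d :: X).length ∧ IsIndependent L D (acl C ∩ D) (b ++ q) ∧
      ∀ g : M ≃[L] M, Set.EqOn g id C → (d :: X).map g ≠ b := by
  obtain ⟨b, hlen, hb⟩ :=
    hD.exists_isIndependent hM (hC.union (finite_entries q)) (d :: X).length
  refine ⟨b, hlen, (isIndependent_append q).2 ⟨hb.mono hM ?_, hq⟩, ?_⟩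
  · exact Set.union_subset (Set.inter_subset_left.trans (aclSet_mono Set.subset_union_left))
      (Set.subset_union_right.trans (subset_aclSet _))
  · rintro g hg rfl
    refine (hb.mono hM (Set.subset_union_left.trans (subset_aclSet _))).2.1 ?_
    rwa [← hg.image_eq_self, entries_map, ← Set.image_union, apply_mem_aclSet_image_iff]

theorem exists_blocks (hD : IsStronglyMinimal L D) (hM : IsOligomorphic L M)
    (hmod : ModularGeometryOn L M D) (hC : C.Finite) (hX : IsIndependent L D C X) (hd : d ∈ D)
    (hdC : d ∈ acl (C ∪ entries X)) (hdX : d ∉ acl (acl C ∩ D ∪ entries X)) (s : Set ℕ) :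
    ∃ b : ℕ → List M, ∀ k, (b k).length = (d :: X).length ∧
      IsIndependent L D (acl C ∩ D) (concatBlocks b k) ∧
      ((∃ g : M ≃[L] M, Set.EqOn g id C ∧ (d :: X).map g = b k) ↔ k ∈ s) := by
  have hstep (k : ℕ) (q : {q // IsIndependent L D (acl C ∩ D) q}) : ∃ b : List M,
      b.length = (d :: X).length ∧ IsIndependent L D (acl C ∩ D) (b ++ q.1) ∧
        ((∃ g : M ≃[L] M, Set.EqOn g id C ∧ (d :: X).map g = b) ↔ k ∈ s) := by
    by_cases hk : k ∈ s
    · obtain ⟨g, hg, hgq⟩ := exists_isIndependent_map_append hD hM hmod hC hX hd hdC hdX q.2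
      exact ⟨_, List.length_map _, hgq, iff_of_true ⟨g, hg, rfl⟩ hk⟩
    · obtain ⟨b, hlen, hbq, hne⟩ := exists_isIndependent_append_forall_map_ne hD hM hC hdC q.2
      exact ⟨b, hlen, hbq, iff_of_false (fun ⟨g, hg, hgb⟩ => hne g hg hgb) hk⟩
  choose blk hlen hind hiff using hstep
  let Q (k : ℕ) : {q // IsIndependent L D (acl C ∩ D) q} :=
    k.rec ⟨[], trivial⟩ fun k q => ⟨blk k q ++ q.1, hind k q⟩
  have hQ (k : ℕ) : concatBlocks (fun k => blk k (Q k)) k = (Q k).1 := by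
    induction k with
    | zero => rfl
    | succ k ih => rw [concatBlocks, ih]
  exact ⟨fun k => blk k (Q k), fun k => ⟨hlen _ _, hQ k ▸ (Q k).2, hiff _ _⟩⟩

theorem IsOligomorphic.definable_setOf_exists_map_eq (hM : IsOligomorphic L M) {m : ℕ}
    (c : Fin m → M) {l r : List M} (hlen : r.length = l.length) :
    (Set.univ : Set M).Definable L {v | ∃ g : M ≃[L] M, g ∘ c = v ∧ l.map g = r} := by
  obtain ⟨w, rfl⟩ : ∃ w : Fin l.length → M, r = List.ofFn w :=
    hlen ▸ ⟨r.get, (List.ofFn_get r).symm⟩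
  convert definable_setOf_sumElim_mem (hM.definable_orbit _ (Sum.elim l.get c))
    (fun i => Set.mem_univ (w i)) using 1
  refine Set.ext fun v => exists_congr fun g => ?_
  have hmap : l.map g = List.ofFn (g ∘ l.get) :=
    (congrArg _ (List.ofFn_get l).symm).trans List.map_ofFn
  simp only [hmap, List.ofFn_inj, Sum.comp_elim, Sum.elim_eq_iff, and_comm]

theorem exists_map_eq_iff_of_map_eq {m : ℕ} {c : Fin m → M} {l b r : List M} {e : M ≃[L] M}
    (h : b.map e = r) : (∃ g : M ≃[L] M, g ∘ c = e ∘ c ∧ l.map g = r) ↔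
      ∃ g : M ≃[L] M, Set.EqOn g id (Set.range c) ∧ l.map g = b := by
  subst h
  constructor
  · rintro ⟨g, hgc, hgl⟩
    refine ⟨e.symm.comp g, ?_, ?_⟩
    · rintro _ ⟨i, rfl⟩
      exact (congrArg e.symm (congrFun hgc i)).trans (e.symm_apply_apply _)
    · rw [show ⇑(e.symm.comp g) = e.symm ∘ g from rfl, ← List.map_map, hgl]
      simp [Function.comp_def]
  · rintro ⟨g, hgc, rfl⟩
    exact ⟨e.comp g, funext fun i => congrArg e (hgc ⟨i, rfl⟩), (List.map_map (g := e)).symm⟩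

/-- A failure `d` of the inclusion would give the independence property: whether or not a block is
conjugate to `d :: X` over `C` can be prescribed independently along a sequence of blocks whose
concatenation is independent, and any two such sequences are conjugate over `acl C ∩ D`. -/
theorem aclSet_union_inter_subset_of_finite (hD : IsStronglyMinimal L D)
    (hM : IsOligomorphic L M) (hmod : ModularGeometryOn L M D) (htraces : HasFewTraces L M)
    (hC : C.Finite) {X : Set M} (hX : X.Finite) (hXD : X ⊆ D) :
    acl (C ∪ X) ∩ D ⊆ acl (acl C ∩ D ∪ X) := by
  rintro d ⟨hdC, hd⟩
  by_contra hdX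
  obtain ⟨X, rfl⟩ : ∃ l : List M, entries l = X :=
    ⟨hX.toFinset.toList, by ext; simp [entries]⟩
  obtain ⟨X', hX'X, hX', hspan⟩ := exists_isIndependent_subset (L := L) C X hXD
  have hblocks := exists_blocks hD hM hmod hC hX' hd
    (hM.aclSet_subset (Set.union_subset (Set.subset_union_left.trans (subset_aclSet _)) hspan) hdC)
    fun h => hdX (aclSet_mono (Set.union_subset_union_right _ hX'X) h)
  obtain ⟨r, hr⟩ := hblocks ∅
  obtain ⟨m, c, -, rfl⟩ := hC.fin_param
  obtain ⟨s, n, hs⟩ := htraces.exists_set_forall_exists_not_iff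
    fun i => hM.definable_setOf_exists_map_eq c (hr i).1
  obtain ⟨b, hb⟩ := hblocks s
  obtain ⟨e, -, he⟩ := hD.exists_map_eq_of_isIndependent hM
    ((hM.finite_aclSet (Set.finite_range c)).inter_of_left D) (hb n).2.1 (hr n).2.1
    ((length_concatBlocks (fun k => (hb k).1) n).trans
      (length_concatBlocks (fun k => (hr k).1) n).symm)
  obtain ⟨i, hi, hni⟩ := hs (e ∘ c)
  have hbi := map_eq_of_map_concatBlocks_eq (fun k => (hb k).1.trans (hr k).1.symm) he i hi
  exact hni ((exists_map_eq_iff_of_map_eq hbi).trans (hb i).2.2)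

theorem aclSet_union_inter_subset (hD : IsStronglyMinimal L D) (hM : IsOligomorphic L M)
    (hmod : ModularGeometryOn L M D) (htraces : HasFewTraces L M) (C : Set M) {X : Set M}
    (hX : X.Finite) (hXD : X ⊆ D) : acl (C ∪ X) ∩ D ⊆ acl (acl C ∩ D ∪ X) := by
  rintro d ⟨hdC, hd⟩
  obtain ⟨F, hF, hFfin, hdF⟩ := exists_finite_subset_mem_aclSet hdC
  have hFX : F ⊆ F ∩ C ∪ X := fun x hx => (hF hx).imp_left fun hxC => ⟨hx, hxC⟩
  have hdX := aclSet_union_inter_subset_of_finite hD hM hmod htraces (hFfin.inter_of_left C) hX hXD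
    ⟨aclSet_mono hFX hdF, hd⟩
  exact aclSet_mono (Set.union_subset_union_left X
    (Set.inter_subset_inter_left D (aclSet_mono Set.inter_subset_right))) hdX

end Modular

/-! ### Models omitting new points of a strongly minimal set -/

section Extension

variable {L : FirstOrder.Language.{0, 0}} {M : Type} [L.Structure M] {A B D : Set M} {b c : M}
  {α β : Type}

local notation "acl" => aclSet L M

theorem definable₁_iff_exists_realize {s : Set M} :
    A.Definable₁ L s ↔ ∃ (k : ℕ) (φ : L.Formula (Fin k ⊕ Fin 1)) (a : Fin k → M),
      (∀ i, a i ∈ A) ∧ s = {y | φ.Realize (Sum.elim a fun _ => y)} := by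
  constructor
  · intro hs
    obtain ⟨B, hBA, S, hS, hsS⟩ := exists_finset_eq_setOf_sumElim_mem hs
    obtain ⟨φ, rfl⟩ := Set.empty_definable_iff.1 hS
    refine ⟨_, φ.relabel (Sum.map B.equivFin id), fun i => B.equivFin.symm i,
      fun i => hBA (B.equivFin.symm i).2, Set.ext fun y => (Set.ext_iff.1 hsS fun _ => y).trans ?_⟩
    rw [Set.mem_ofPred_eq (x := y), Formula.realize_relabel, Sum.elim_comp_map]
    exact iff_of_eq (congrArg (fun a => φ.Realize (Sum.elim a _)) (funext fun x => by simp))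
  · rintro ⟨k, φ, a, ha, rfl⟩
    exact definable₁_setOf_sumElim_mem (Set.empty_definable_iff.2 ⟨φ, rfl⟩) ha

theorem mem_aclSet_iff_exists_definable₁ :
    b ∈ acl A ↔ ∃ s, A.Definable₁ L s ∧ b ∈ s ∧ s.Finite := by
  constructor
  · rintro ⟨k, φ, a, ha, hb, hfin⟩
    exact ⟨_, definable₁_iff_exists_realize.2 ⟨k, φ, a, ha, rfl⟩, hb, hfin⟩
  · rintro ⟨s, hs, hb, hfin⟩
    obtain ⟨k, φ, a, ha, rfl⟩ := definable₁_iff_exists_realize.1 hs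
    exact ⟨k, φ, a, ha, hb, hfin⟩

theorem exists_definable_eq_of_definable_insert {s : Set (α → M)}
    (hs : (insert c A).Definable L s) :
    ∃ Θ : Set (Fin 1 ⊕ α → M), A.Definable L Θ ∧ s = {v | Sum.elim (fun _ => c) v ∈ Θ} := by
  classical
  obtain ⟨φ, rfl⟩ := Set.definable_iff_exists_formula_sum.1 hs
  let f : (insert c A : Set M) ⊕ α → A ⊕ (Fin 1 ⊕ α) :=
    Sum.elim (fun x => if hx : x.1 ∈ A then Sum.inl ⟨x, hx⟩ else Sum.inr (Sum.inl 0))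
      (Sum.inr ∘ Sum.inr)
  have hf (v : α → M) : Sum.elim Subtype.val (Sum.elim (fun _ => c) v) ∘ f =
      Sum.elim Subtype.val v := by
    funext i
    rcases i with x | i
    · by_cases hx : x.1 ∈ A
      · simp [f, hx]
      · simpa [f, hx] using (x.2.resolve_right hx).symm
    · rfl
  refine ⟨_, Set.definable_iff_exists_formula_sum.2 ⟨φ.relabel f, rfl⟩, Set.ext fun v => ?_⟩
  simp only [Set.mem_ofPred_eq]
  rw [Formula.realize_relabel, hf]

theorem definable_setOf_sumElim_mem_right {Θ : Set (α ⊕ β → M)} (hΘ : A.Definable L Θ) {w : β → M}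
    (hw : ∀ b, w b ∈ A) : A.Definable L {v | Sum.elim v w ∈ Θ} := by
  obtain ⟨φ, rfl⟩ := Set.definable_iff_exists_formula_sum.1 hΘ
  let f : A ⊕ (α ⊕ β) → A ⊕ α := Sum.elim Sum.inl (Sum.elim Sum.inr fun b => Sum.inl ⟨w b, hw b⟩)
  refine Set.definable_iff_exists_formula_sum.2 ⟨φ.relabel f, Set.ext fun v => ?_⟩
  simp only [Set.mem_ofPred_eq]
  rw [Formula.realize_relabel]
  refine iff_of_eq (congrArg φ.Realize (funext fun i => ?_))
  rcases i with x | i | i <;> rfl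

theorem definable₁_setOf_exists_sumElim_mem [Finite α] {Ψ : Set (α → M)} (hΨ : A.Definable L Ψ)
    {Θ : Set (α ⊕ Fin 1 → M)} (hΘ : A.Definable L Θ) :
    A.Definable₁ L {y | ∃ x ∈ Ψ, Sum.elim x (fun _ => y) ∈ Θ} := by
  refine (congrArg (A.Definable L) (Set.ext fun z => ?_)).mp
    (((hΨ.preimage_comp Sum.inl).inter hΘ).image_comp (Sum.inr : Fin 1 → α ⊕ Fin 1))
  rw [Set.mem_ofPred_eq, Set.mem_ofPred_eq,
    show (fun _ => z 0) = z from funext fun i => congrArg z (Subsingleton.elim 0 i)]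
  constructor
  · rintro ⟨g, ⟨hgΨ, hgΘ⟩, rfl⟩
    exact ⟨g ∘ Sum.inl, hgΨ, (Sum.elim_comp_inl_inr g).symm ▸ hgΘ⟩
  · rintro ⟨x, hx, hxz⟩
    exact ⟨_, ⟨hx, hxz⟩, rfl⟩

/-- If `d` is algebraic over `c` and `A` via `Θ`, then the projection of `Ψ ∩ Θ` to `D` cannot be
cofinite: otherwise it would contain infinitely many points of `A`, all of them related to `c` by
isolation. -/
theorem IsStronglyMinimal.aclSet_insert_inter_subset (hD : IsStronglyMinimal L D)
    (hinf : (A ∩ D).Infinite) {Ψ : Set (Fin 1 → M)} (hΨ : IsIsolating L A Ψ) {c : Fin 1 → M}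
    (hc : c ∈ Ψ) : acl (insert (c 0) A) ∩ D ⊆ acl A := by
  rintro d ⟨hd, hdD⟩
  obtain ⟨s, hs, hds, hsfin⟩ := mem_aclSet_iff_exists_definable₁.1 hd
  obtain ⟨Θ, hΘ, hsΘ⟩ := exists_definable_eq_of_definable_insert hs
  have hmem (y : M) : y ∈ s ↔ Sum.elim c (fun _ => y) ∈ Θ := by
    rw [← (funext fun i => by rw [Subsingleton.elim i 0] : (fun _ => c 0) = c)]
    exact Set.ext_iff.1 hsΘ fun _ => y
  let χ : Set M := {y | ∃ x ∈ Ψ, Sum.elim x (fun _ => y) ∈ Θ}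
  have hχ : A.Definable₁ L χ := definable₁_setOf_exists_sumElim_mem hΨ.definable hΘ
  have hχs : χ ∩ (A ∩ D) ⊆ s := by
    rintro y ⟨⟨x, hx, hxy⟩, hyA, -⟩
    exact (hmem y).2
      (hΨ.subset_of_mem (definable_setOf_sumElim_mem_right hΘ fun _ => hyA) hx hxy hc)
  rcases hD.stronglyMinimalSet.2 χ (hχ.mono (Set.subset_univ A)) with hfin | hcofin
  · exact mem_aclSet_iff_exists_definable₁.2
      ⟨χ ∩ D, hχ.inter (hD.definable.mono (Set.empty_subset A)),
        ⟨⟨c, hc, (hmem d).1 hds⟩, hdD⟩, hfin⟩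
  · refine absurd (hsfin.subset fun y hy => hχs ⟨by_contra fun hyχ => ?_, hy.1⟩) (hinf.sdiff hcofin)
    exact hy.2 ⟨hy.1.2, hyχ⟩

theorem aclSet_sUnion_inter_subset {𝒩 : Set (Set M)} (hchain : IsChain (· ⊆ ·) 𝒩)
    (hne : 𝒩.Nonempty) (h : ∀ N ∈ 𝒩, acl N ∩ D ⊆ B) : acl (⋃₀ 𝒩) ∩ D ⊆ B := by
  rintro b ⟨hb, hbD⟩
  obtain ⟨F, hF, hFfin, hbF⟩ := exists_finite_subset_mem_aclSet hb
  obtain ⟨N, hN, hFN⟩ := DirectedOn.exists_mem_subset_of_finite_of_subset_sUnion hne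
    hchain.directedOn hFfin hF
  exact h N hN ⟨aclSet_mono hFN hbF, hbD⟩

theorem exists_maximal_aclSet_inter_subset (h : acl A ∩ D ⊆ B) :
    ∃ N, A ⊆ N ∧ Maximal (fun N => acl N ∩ D ⊆ B) N :=
  zorn_subset_nonempty {N | acl N ∩ D ⊆ B} (fun 𝒩 h𝒩 hchain hne =>
    ⟨⋃₀ 𝒩, aclSet_sUnion_inter_subset hchain hne h𝒩,
      fun _ hs => Set.subset_sUnion_of_mem hs⟩) A h

theorem IsStronglyMinimal.exists_elementarySubstructure (hD : IsStronglyMinimal L D)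
    (htraces : HasFewTraces L M) (hBA : B ⊆ A) (hBD : B ⊆ D) (hinf : B.Infinite)
    (h : acl A ∩ D ⊆ B) :
    ∃ S : L.ElementarySubstructure M, A ⊆ S ∧ (S : Set M) ∩ D ⊆ B := by
  obtain ⟨N, hAN, hN⟩ := exists_maximal_aclSet_inter_subset h
  have hND : (N ∩ D).Infinite := hinf.mono (Set.subset_inter (hBA.trans hAN) hBD)
  have hmeets : L.MeetsDefinable N := by
    rintro s ⟨x, hx⟩ hs
    obtain ⟨Ψ, hΨs, hΨ⟩ := htraces.exists_isIsolating_subset hs ⟨fun _ => x, hx⟩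
    obtain ⟨c, hc⟩ := hΨ.nonempty
    refine ⟨c 0, hΨs hc, hN.2 (fun d hd => hN.1 ⟨?_, hd.2⟩) (Set.subset_insert _ _)
      (Set.mem_insert _ _)⟩
    exact hD.aclSet_insert_inter_subset hND hΨ hc hd
  have hS : (hmeets.toElementarySubstructure : Set M) = N := hmeets.closure_eq_self
  refine ⟨hmeets.toElementarySubstructure, ?_⟩
  rw [hS]
  exact ⟨hAN, (Set.inter_subset_inter_left D (subset_aclSet N)).trans hN.1⟩

end Extension

/-! ### Internal sets in ultrapowers -/

section InternalSet

variable {W M : Type} (V : Ultrafilter W) {P Q : W → Set M}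

/-- The ultraproduct of the sets `P w`, as a subset of the ultrapower of `M`. -/
def internalSet (P : W → Set M) : Set (Ultrapower V M) :=
  {x | ∃ f, Ultrapower.mk V f = x ∧ ∀ᶠ w in (V : Filter W), f w ∈ P w}

theorem mk_mem_internalSet {f : W → M} :
    Ultrapower.mk V f ∈ internalSet V P ↔ ∀ᶠ w in (V : Filter W), f w ∈ P w := by
  refine ⟨?_, fun hf => ⟨f, rfl, hf⟩⟩
  rintro ⟨g, hgf, hg⟩
  filter_upwards [(Ultrapower.mk_eq_mk V).1 hgf, hg] with w hw hgw
  rwa [← hw]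

theorem internalSet_inter :
    internalSet V P ∩ internalSet V Q = internalSet V fun w => P w ∩ Q w := by
  refine Set.ext fun x => ?_
  obtain ⟨f, rfl⟩ := Ultrapower.mk_surjective V x
  rw [Set.mem_inter_iff, mk_mem_internalSet, mk_mem_internalSet, mk_mem_internalSet]
  exact Filter.eventually_and.symm

theorem internalSet_sdiff :
    internalSet V P \ internalSet V Q = internalSet V fun w => P w \ Q w := by
  refine Set.ext fun x => ?_
  obtain ⟨f, rfl⟩ := Ultrapower.mk_surjective V x
  rw [Set.mem_sdiff, mk_mem_internalSet, mk_mem_internalSet, mk_mem_internalSet,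
    ← Ultrafilter.eventually_not]
  exact Filter.eventually_and.symm

theorem internalSet_const_of_finite {F : Set M} (hF : F.Finite) :
    internalSet V (fun _ => F) = (fun x => Ultrapower.mk V fun _ => x) '' F := by
  refine Set.ext fun x => ?_
  obtain ⟨f, rfl⟩ := Ultrapower.mk_surjective V x
  rw [mk_mem_internalSet]
  simpa only [exists_eq_right, Set.mem_image, Ultrapower.mk_eq_mk] using
    Ultrafilter.eventually_exists_mem_iff (f := V) hF (P := fun x w => x = f w)

theorem natCast_le_encard_iff {α : Type*} {s : Set α} {m : ℕ} :
    (m : ℕ∞) ≤ s.encard ↔ ∃ t : Fin m → α, Function.Injective t ∧ ∀ i, t i ∈ s := by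
  constructor
  · intro h
    obtain ⟨t, hts, ht⟩ := Set.exists_subset_encard_eq h
    obtain ⟨n, a, ha, rfl⟩ := (Set.finite_of_encard_eq_coe ht).fin_param
    obtain rfl : n = m := by simpa [← Set.image_univ, ha.encard_image] using ht
    exact ⟨a, ha, Set.range_subset_iff.1 hts⟩
  · rintro ⟨t, ht, hts⟩
    calc (m : ℕ∞) = (Set.range t).encard := by simp [← Set.image_univ, ht.encard_image]
      _ ≤ s.encard := Set.encard_le_encard (Set.range_subset_iff.2 hts)

theorem le_encard_internalSet_iff {m : ℕ} :
    (m : ℕ∞) ≤ (internalSet V P).encard ↔ ∀ᶠ w in (V : Filter W), (m : ℕ∞) ≤ (P w).encard := by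
  simp only [natCast_le_encard_iff]
  constructor
  · rintro ⟨x, hx, hxP⟩
    choose f hf using fun i => Ultrapower.mk_surjective V (x i)
    obtain rfl : (fun i => Ultrapower.mk V (f i)) = x := funext hf
    have hinj (i j : Fin m) : ∀ᶠ w in (V : Filter W), f i w = f j w → i = j := by
      rw [Ultrafilter.eventually_imp, ← Ultrapower.mk_eq_mk]
      exact fun hij => .of_forall fun _ => hx hij
    filter_upwards [Filter.eventually_all.2 fun i => Filter.eventually_all.2 (hinj i),
      Filter.eventually_all.2 fun i => (mk_mem_internalSet V).1 (hxP i)] with w hw hwP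
    exact ⟨fun i => f i w, fun i j => hw i j, hwP⟩
  · intro h
    obtain ⟨t, ht⟩ := h.choice
    refine ⟨fun i => Ultrapower.mk V fun w => t w i, fun i j hij => ?_, fun i => ?_⟩
    · obtain ⟨w, hw, hwij⟩ := (ht.and ((Ultrapower.mk_eq_mk V).1 hij)).exists
      exact hw.1 hwij
    · exact (mk_mem_internalSet V).2 (ht.mono fun w hw => hw.2 i)

theorem encard_internalSet_le_iff {m : ℕ} :
    (internalSet V P).encard ≤ m ↔ ∀ᶠ w in (V : Filter W), (P w).encard ≤ m := by
  have hle (x : ℕ∞) : x ≤ m ↔ ¬ ((m + 1 : ℕ) : ℕ∞) ≤ x := by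
    rw [Nat.cast_succ, ENat.add_one_le_iff (ENat.natCast_ne_top m), not_lt]
  simp only [hle, le_encard_internalSet_iff, Ultrafilter.eventually_not]

end InternalSet

section Definable

variable {W : Type} (V : Ultrafilter W) {L : FirstOrder.Language.{0, 0}} {M : Type} [L.Structure M]
  [Nonempty M]

theorem setOf_realize_sumElim_mk {k : ℕ} (φ : L.Formula (Fin k ⊕ Fin 1)) (f : Fin k → W → M) :
    {y | φ.Realize (Sum.elim (fun i => Ultrapower.mk V (f i)) fun _ => y)} =
      internalSet V fun w => {y | φ.Realize (Sum.elim (fun i => f i w) fun _ => y)} := by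
  refine Set.ext fun x => ?_
  obtain ⟨g, rfl⟩ := Ultrapower.mk_surjective V x
  rw [mk_mem_internalSet]
  exact Ultrapower.realize_mk_sumElim V φ f fun _ => g

theorem aclSet_internalSet_subset (P : W → Set M) :
    aclSet L (Ultrapower V M) (internalSet V P) ⊆ internalSet V fun w => aclSet L M (P w) := by
  rintro x ⟨k, φ, a, ha, hx, hfin⟩
  obtain ⟨g, rfl⟩ := Ultrapower.mk_surjective V x
  choose f hf hfP using ha
  obtain rfl : (fun i => Ultrapower.mk V (f i)) = a := funext hf
  obtain ⟨m, hm⟩ := hfin.exists_encard_eq_coe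
  have hsol := hm.le
  rw [setOf_realize_sumElim_mk, encard_internalSet_le_iff] at hsol
  rw [mk_mem_internalSet]
  filter_upwards [hsol, Filter.eventually_all.2 hfP,
    (Ultrapower.realize_mk_sumElim V φ f fun _ => g).1 hx] with w hw hwP hwφ
  exact ⟨k, φ, _, hwP, hwφ, Set.finite_of_encard_le_coe hw⟩

theorem IsStronglyMinimal.internalSet {D : Set M} (hD : IsStronglyMinimal L D)
    (hM : IsOligomorphic L M) : IsStronglyMinimal L (Paper.internalSet V fun _ => D) where
  definable := by
    obtain ⟨φ, hφ⟩ := Set.empty_definable_iff.1 hD.definable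
    refine Set.empty_definable_iff.2 ⟨φ, Set.ext fun x => ?_⟩
    choose f hf using fun i => Ultrapower.mk_surjective V (x i)
    obtain rfl : (fun i => Ultrapower.mk V (f i)) = x := funext hf
    refine (mk_mem_internalSet V).trans (Iff.trans ?_ (Ultrapower.realize_mk V φ f).symm)
    exact Filter.eventually_congr (.of_forall fun w => Set.ext_iff.1 hφ fun i => f i w)
  stronglyMinimalSet := by
    refine ⟨Set.encard_eq_top_iff.1 (ENat.eq_top_iff_forall_ge.2 fun m => ?_), fun s hs => ?_⟩
    · rw [le_encard_internalSet_iff, hD.stronglyMinimalSet.1.encard_eq]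
      exact .of_forall fun _ => le_top
    obtain ⟨k, φ, z, -, rfl⟩ := definable₁_iff_exists_realize.1 hs
    obtain ⟨m, hm⟩ := hD.exists_forall_encard_le hM φ
    choose f hf using fun i => Ultrapower.mk_surjective V (z i)
    obtain rfl : (fun i => Ultrapower.mk V (f i)) = z := funext hf
    rw [setOf_realize_sumElim_mk, internalSet_inter, internalSet_sdiff]
    refine Or.imp (fun h => Set.finite_of_encard_le_coe ((encard_internalSet_le_iff V).2 h))
      (fun h => Set.finite_of_encard_le_coe ((encard_internalSet_le_iff V).2 h))
      (Ultrafilter.eventually_or.1 (.of_forall fun w => hm fun i => f i w))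

end Definable

/-! ### Finiteness of envelopes -/

section Envelope

variable {L : FirstOrder.Language.{0, 0}} {M : Type} [L.Structure M] {D E : Set M}

theorem mk_const_injective {W : Type} (V : Ultrafilter W) :
    Function.Injective fun x : M => Ultrapower.mk V fun _ => x :=
  fun _ _ hxy => Filter.eventually_const.1 ((Ultrapower.mk_eq_mk V).1 hxy)

theorem aclSet_inter_internalSet_subset [Nonempty M] (hD : IsStronglyMinimal L D)
    (hM : IsOligomorphic L M) (hmod : ModularGeometryOn L M D) (htraces : HasFewTraces L M)
    (hE : (aclSet L M E ∩ D).Finite) {W : Type} (V : Ultrafilter W) {A : Set (Ultrapower V M)}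
    (hA : A ⊆ internalSet V (fun _ => E) ∪ (fun x => Ultrapower.mk V fun _ => x) '' D) :
    aclSet L (Ultrapower V M) A ∩ internalSet V (fun _ => D) ⊆
      (fun x => Ultrapower.mk V fun _ => x) '' D := by
  rintro x ⟨hxA, hxD⟩
  obtain ⟨F, hFA, hF, hxF⟩ := exists_finite_subset_mem_aclSet hxA
  let X : Set M := {d ∈ D | (Ultrapower.mk V fun _ => d) ∈ F}
  have hX : X.Finite :=
    (hF.preimage (mk_const_injective V).injOn).subset fun d hd => hd.2
  have hFX : F ⊆ internalSet V fun _ => E ∪ X := by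
    intro y hy
    obtain ⟨f, rfl, hf⟩ | ⟨d, hd, rfl⟩ := hA (hFA hy)
    · exact (mk_mem_internalSet V).2 (hf.mono fun _ => Or.inl)
    · exact (mk_mem_internalSet V).2 (.of_forall fun _ => Or.inr ⟨hd, hy⟩)
  let Y : Set M := aclSet L M (E ∪ X) ∩ D
  have hY : Y.Finite := (hM.finite_aclSet (hE.union hX)).subset
    (aclSet_union_inter_subset hD hM hmod htraces E hX fun _ hd => hd.1)
  have hxY : x ∈ internalSet V fun _ => Y := by
    rw [← internalSet_inter]
    exact ⟨aclSet_internalSet_subset V _ (aclSet_mono hFX hxF), hxD⟩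
  rw [internalSet_const_of_finite V hY] at hxY
  exact Set.image_mono Set.inter_subset_right hxY

theorem internalSet_setOf_realize [Nonempty M] {W : Type} (V : Ultrafilter W)
    (δ : L.Formula (Fin 1)) : internalSet V (fun _ => {x : M | δ.Realize fun _ => x}) =
      {x : Ultrapower V M | δ.Realize fun _ => x} := by
  refine Set.ext fun x => ?_
  obtain ⟨f, rfl⟩ := Ultrapower.mk_surjective V x
  exact (mk_mem_internalSet V).trans (Ultrapower.realize_mk V δ fun _ => f).symm

theorem exists_mem_ultrafilter_le_cofinite {α : Type*} {s : Set α} (hs : s.Infinite) :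
    ∃ U : Ultrafilter α, s ∈ U ∧ (U : Filter α) ≤ .cofinite := by
  have := Filter.cofinite_inf_principal_neBot_iff.2 hs
  have hU := Ultrafilter.of_le (Filter.cofinite ⊓ Filter.principal s)
  exact ⟨_, Filter.le_principal_iff.1 (hU.trans inf_le_right), hU.trans inf_le_left⟩

variable [Countable L.Symbols]

theorem exists_not_countable_setOf_realize [Nonempty M] (δ : L.Formula (Fin 1))
    (hδ : {x : M | δ.Realize fun _ => x}.Infinite) :
    ∃ N : Bundled.{0} L.Structure, (N ≅[L] M) ∧ Cardinal.mk N = Cardinal.aleph 1 ∧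
      ¬ {x : N | δ.Realize fun _ => x}.Countable := by
  let ω₁ := (Cardinal.aleph.{0} 1).ord.ToType
  have hω₁ : Cardinal.mk ω₁ = Cardinal.aleph 1 := Cardinal.mk_ord_toType _
  obtain ⟨U, hδU, hU⟩ := exists_mem_ultrafilter_le_cofinite hδ
  let V := emUltrafilter ω₁ U
  have hcard : Cardinal.mk (Set.range fun i : ω₁ => Ultrapower.mk V fun z => z i) =
      Cardinal.aleph 1 :=
    (Cardinal.mk_range_eq _ (mk_eval_injective U hU)).trans hω₁
  obtain ⟨S, hS, hScard⟩ := exists_elementarySubstructure_mk_eq (L := L)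
    (Cardinal.aleph0_le_aleph 1) hcard.le (hcard ▸ Cardinal.mk_set_le _)
  refine ⟨⟨S, inferInstance⟩, S.elementarilyEquivalent.trans (Ultrapower.elementarilyEquivalent V),
    hScard, fun hcount => ?_⟩
  have hsub : (Set.range fun i : ω₁ => Ultrapower.mk V fun z => z i) ⊆
      (Subtype.val : S → _) '' {x : S | δ.Realize fun _ => x} := by
    rintro _ ⟨i, rfl⟩
    refine ⟨⟨_, hS ⟨i, rfl⟩⟩, (S.subtype.map_formula δ _).1 ?_, rfl⟩
    exact (Ultrapower.realize_mk V δ fun _ z => z i).2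
      (eventually_emUltrafilter_apply_mem U i hδU)
  have hle := Cardinal.le_aleph0_iff_set_countable.2 ((hcount.image _).mono hsub)
  exact (hcard.trans_gt Cardinal.aleph0_lt_aleph_one).not_ge hle

theorem not_countable_setOf_realize_of_categorical [Nonempty M]
    (hcat : (Cardinal.aleph.{0} 1).Categorical (L.completeTheory M)) (δ : L.Formula (Fin 1))
    (hδ : {x : M | δ.Realize fun _ => x}.Infinite) {N : Type} [L.Structure N] (hN : N ≅[L] M)
    (hcard : Cardinal.aleph 1 ≤ Cardinal.mk N) : ¬ {x : N | δ.Realize fun _ => x}.Countable := by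
  intro hcount
  obtain ⟨S, -, hS⟩ := exists_elementarySubstructure_mk_eq (L := L) (s := (∅ : Set N))
    (Cardinal.aleph0_le_aleph 1) (by simp) hcard
  obtain ⟨N', hN', hcard', huncount⟩ := exists_not_countable_setOf_realize δ hδ
  have := nonempty_of_mk_eq_aleph hS
  have := nonempty_of_mk_eq_aleph hcard'
  obtain ⟨e⟩ := nonempty_equiv_of_categorical hcat hN' (S.elementarilyEquivalent.trans hN) hcard' hS
  refine huncount ((hcount.preimage (Subtype.val_injective.comp e.injective)).mono fun x hx => ?_)
  exact (S.subtype.map_formula δ _).2 ((StrongHomClass.realize_formula e δ).2 hx)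

variable [L.IsRelational]

theorem exists_countable_setOf_realize [Countable M] [Infinite M] (hD : IsStronglyMinimal L D)
    (hM : IsOligomorphic L M) (hmod : ModularGeometryOn L M D)
    (hcat : (Cardinal.aleph.{0} 1).Categorical (L.completeTheory M)) (hEinf : E.Infinite)
    (hE : (aclSet L M E ∩ D).Finite) {δ : L.Formula (Fin 1)}
    (hδ : D = {x | δ.Realize fun _ => x}) :
    ∃ N : Bundled.{0} L.Structure, (N ≅[L] M) ∧ Cardinal.aleph 1 ≤ Cardinal.mk N ∧
      {x : N | δ.Realize fun _ => x}.Countable := by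
  obtain ⟨U, hEU, hU⟩ := exists_mem_ultrafilter_le_cofinite hEinf
  let ω₁ := (Cardinal.aleph.{0} 1).ord.ToType
  have hω₁ : Cardinal.mk ω₁ = Cardinal.aleph 1 := Cardinal.mk_ord_toType _
  let V := emUltrafilter ω₁ U
  let D₀ : Set (Ultrapower V M) := (fun x => Ultrapower.mk V fun _ => x) '' D
  let A : Set (Ultrapower V M) := (Set.range fun i : ω₁ => Ultrapower.mk V fun z => z i) ∪ D₀
  have hA : aclSet L (Ultrapower V M) A ∩ internalSet V (fun _ => D) ⊆ D₀ := by
    refine aclSet_inter_internalSet_subset hD hM hmod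
      (hasFewTraces_of_categorical hcat (rfl : M ≅[L] M)) hE V (Set.union_subset_union_left _ ?_)
    rintro _ ⟨i, rfl⟩
    exact (mk_mem_internalSet V).2 (eventually_emUltrafilter_apply_mem U i hEU)
  have hD₀ : D₀ ⊆ internalSet V fun _ => D := by
    rintro _ ⟨d, hd, rfl⟩
    exact (mk_mem_internalSet V).2 (.of_forall fun _ => hd)
  obtain ⟨S, hAS, hSD⟩ := (hD.internalSet V hM).exists_elementarySubstructure
    (hasFewTraces_of_categorical hcat (Ultrapower.elementarilyEquivalent V))
    Set.subset_union_right hD₀ (hD.stronglyMinimalSet.1.image (mk_const_injective V).injOn) hA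
  have heval (i : ω₁) : (Ultrapower.mk V fun z => z i) ∈ S := hAS (Or.inl ⟨i, rfl⟩)
  refine ⟨⟨S, inferInstance⟩,
    S.elementarilyEquivalent.trans (Ultrapower.elementarilyEquivalent V), ?_, ?_⟩
  · exact hω₁ ▸ Cardinal.mk_le_of_injective (f := fun i => (⟨_, heval i⟩ : S))
      fun i j hij => mk_eval_injective U hU (congrArg Subtype.val hij)
  · refine (((Set.to_countable D).image _).preimage Subtype.val_injective).mono fun x hx =>
      hSD ⟨x.2, ?_⟩
    rw [hδ, internalSet_setOf_realize]
    exact (S.subtype.map_formula δ _).2 hx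

/-- If `E` were infinite, then `ℵ₁` indiscernible copies of a nonprincipal ultrafilter on `E` would
span, together with `D`, an uncountable model in which `D` has no new points. -/
theorem finite_of_finite_aclSet_inter [Countable M] [Infinite M] (hD : IsStronglyMinimal L D)
    (hM : IsOligomorphic L M) (hmod : ModularGeometryOn L M D)
    (hcat : (Cardinal.aleph.{0} 1).Categorical (L.completeTheory M))
    (hE : (aclSet L M E ∩ D).Finite) : E.Finite := by
  by_contra hEinf
  obtain ⟨δ, hδ⟩ := Set.empty_definable_iff.1 hD.definable
  have hDδ : D = {x : M | δ.Realize fun _ => x} := Set.ext fun x => Set.ext_iff.1 hδ fun _ => x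
  obtain ⟨N, hN, hcard, hcount⟩ := exists_countable_setOf_realize hD hM hmod hcat hEinf hE hDδ
  exact not_countable_setOf_realize_of_categorical hcat δ (hDδ ▸ hD.stronglyMinimalSet.1) hN hcard
    hcount

theorem exists_finite_isEnvelope [Countable M] [Infinite M] (hD : IsStronglyMinimal L D)
    (hM : IsOligomorphic L M) (hmod : ModularGeometryOn L M D)
    (hcat : (Cardinal.aleph.{0} 1).Categorical (L.completeTheory M)) {F : Set M} (hF : F.Finite) :
    ∃ E, F ⊆ E ∧ E.Finite ∧ IsEnvelope L M D E := by
  obtain ⟨E, hFE, hE⟩ := exists_maximal_aclSet_inter_subset (L := L) (D := D) (A := F)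
    Set.inter_subset_left
  refine ⟨E, hFE, finite_of_finite_aclSet_inter hD hM hmod hcat
    ((hM.finite_aclSet hF).subset hE.1), F, hFE, ?_, fun E' hEE' hE' => ?_⟩
  · exact (Set.subset_inter hE.1 Set.inter_subset_right).antisymm
      (Set.inter_subset_inter_left D (aclSet_mono hFE))
  · exact (hE.2 (hE'.trans_subset Set.inter_subset_left) hEE').antisymm hEE'

end Envelope

/-! ### Amalgamation of envelopes -/

section Cofinal

variable {L : FirstOrder.Language.{0, 0}} {C K : Set (Bundled.{0} L.Structure)}

theorem IsCofinalIn.jointEmbedding (hC : IsCofinalIn C K) (hK : JointEmbedding K) :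
    JointEmbedding C := by
  intro A hA B hB
  obtain ⟨P, hP, ⟨f⟩, ⟨g⟩⟩ := hK A (hC.1 hA) B (hC.1 hB)
  obtain ⟨Q, hQ, ⟨h⟩⟩ := hC.2 P hP
  exact ⟨Q, hQ, ⟨h.comp f⟩, ⟨h.comp g⟩⟩

theorem IsCofinalIn.amalgamation (hC : IsCofinalIn C K) (hK : Amalgamation K) :
    Amalgamation C := by
  intro A B₁ B₂ f g hA hB₁ hB₂
  obtain ⟨P, f', g', hP, hfg⟩ := hK A B₁ B₂ f g (hC.1 hA) (hC.1 hB₁) (hC.1 hB₂)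
  obtain ⟨Q, hQ, ⟨h⟩⟩ := hC.2 P hP
  refine ⟨Q, h.comp f', h.comp g', hQ, ?_⟩
  rw [Embedding.comp_assoc, Embedding.comp_assoc, hfg]

theorem isAmalgamationBase_of_amalgamation (hK : Amalgamation K) {A : Bundled.{0} L.Structure}
    (hA : A ∈ K) : IsAmalgamationBase K A :=
  ⟨hA, fun B₁ B₂ f g hB₁ hB₂ => hK A B₁ B₂ f g hA hB₁ hB₂⟩

end Cofinal

section Classes

variable {L : FirstOrder.Language.{0, 0}} [L.IsRelational] {M : Type} [L.Structure M] {D : Set M}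

theorem finSubClass_eq_age : finSubClass L M = L.age M :=
  Set.ext fun _ => and_congr_left' Structure.fg_iff_finite.symm

theorem isCofinalIn_envClass
    (h : ∀ F : Set M, F.Finite → ∃ E, F ⊆ E ∧ E.Finite ∧ IsEnvelope L M D E) :
    IsCofinalIn (envClass L M D) (finSubClass L M) := by
  constructor
  · rintro A ⟨E, hE, -, ⟨e⟩⟩
    have : Finite E := hE
    let i : E ↪[L] M :=
      ⟨⟨Subtype.val, Subtype.val_injective⟩, fun f => isEmptyElim f, fun _ _ => .rfl⟩
    exact ⟨.of_equiv E e.symm.toEquiv, ⟨i.comp e.toEmbedding⟩⟩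
  · rintro A ⟨_, ⟨f⟩⟩
    obtain ⟨E, hfE, hE, hEnv⟩ := h (Set.range f) (Set.finite_range f)
    exact ⟨⟨E, inferInstance⟩, ⟨E, hE, hEnv, ⟨.refl L E⟩⟩,
      ⟨⟨fun a => ⟨f a, hfE ⟨a, rfl⟩⟩, fun _ _ hab => f.injective (congrArg Subtype.val hab)⟩,
        fun g => isEmptyElim g, fun R x => f.map_rel R x⟩⟩

end Classes

/-! ### Genericity -/

section Point

variable {L : FirstOrder.Language.{0, 0}} [L.IsRelational] {α : Type}

/-- A copy of `ℕ` carrying the structure coded by the point `y`, so that the structures of different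
points can be told apart by their types. -/
def PointModel (_ : StructureSpace L) : Type := ℕ

instance (y : StructureSpace L) : L.Structure (PointModel y) := pointStructure y

instance (y : StructureSpace L) : Countable (PointModel y) := inferInstanceAs (Countable ℕ)

theorem exists_sameQFType_of_mem_spaceOf_age {M : Type} [L.Structure M] {y : StructureSpace L}
    (hy : y ∈ spaceOf (L.age M)) [Finite α] (b : α → PointModel y) :
    ∃ a : α → M, SameQFType L a b := by
  let S := Substructure.closure L (Set.range b)
  have hS : S.FG := Substructure.fg_def.2 ⟨_, Set.finite_range b, rfl⟩
  have hage : (⟨S, inferInstance⟩ : Bundled.{0} L.Structure) ∈ L.age (PointModel y) :=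
    ⟨(Substructure.fg_iff_structure_fg S).1 hS, ⟨S.subtype⟩⟩
  obtain ⟨-, ⟨f⟩⟩ := hy hage
  let b' (i : α) : S := ⟨b i, Substructure.subset_closure ⟨i, rfl⟩⟩
  exact ⟨f ∘ b', (sameQFType_comp_embedding f b').symm.trans
    (sameQFType_comp_embedding S.subtype b')⟩

theorem SameQFType.exists_sumElim_of_mem_spaceOf_age {M : Type} [L.Structure M] {β : Type}
    (hM : L.IsUltrahomogeneous M) {y : StructureSpace L} (hy : y ∈ spaceOf (L.age M)) [Finite α]
    [Finite β] {a : α → M} {b : α → PointModel y} (h : SameQFType L a b) (c : β → PointModel y) :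
    ∃ d : β → M, SameQFType L (Sum.elim a d) (Sum.elim b c) := by
  obtain ⟨v, hv⟩ := exists_sameQFType_of_mem_spaceOf_age hy (Sum.elim b c)
  have hva : SameQFType L (v ∘ Sum.inl) a := (hv.comp Sum.inl).trans h.symm
  obtain ⟨e, rfl⟩ := hva.exists_equiv hM
  refine ⟨e ∘ v ∘ Sum.inr, ?_⟩
  rw [← Sum.comp_elim, Sum.elim_comp_inl_inr]
  exact (sameQFType_comp_embedding e.toEmbedding v).symm.trans hv

theorem isClopen_setOf_realize {φ : L.Formula α} (hφ : φ.IsQF) (b : α → ℕ) :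
    IsClopen {y : StructureSpace L | Formula.Realize (M := PointModel y) φ b} := by
  have exists_var (t : L.Term (α ⊕ Fin 0)) : ∃ i, t = Term.var (Sum.inl i) := by
    rcases t with (i | i) | f
    exacts [⟨i, rfl⟩, i.elim0, isEmptyElim f]
  unfold Formula.Realize
  unfold Formula at φ
  induction hφ with
  | falsum => exact isClopen_empty
  | of_isAtomic h =>
    cases h with
    | equal t₁ t₂ =>
      obtain ⟨i, rfl⟩ := exists_var t₁
      obtain ⟨j, rfl⟩ := exists_var t₂
      by_cases hb : b i = b j
      · exact (Set.eq_univ_of_forall fun _ => hb) ▸ isClopen_univ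
      · exact (Set.eq_empty_of_forall_notMem fun _ => hb) ▸ isClopen_empty
    | @rel l R ts =>
      choose g hg using fun i => exists_var (ts i)
      obtain rfl : ts = fun i => Term.var (Sum.inl (g i)) := funext hg
      have hc : Continuous fun y : StructureSpace L => y l R (b ∘ g) := by fun_prop
      exact (isClopen_discrete {true}).preimage hc
  | imp _ _ h₁ h₂ =>
    exact h₁.himp h₂

theorem isClopen_setOf_sameQFType {M : Type} [L.Structure M] (hqe : HasQE L M)
    (hM : IsAtomicSet L (Set.univ : Set M)) [Finite α] (a : α → M) (b : α → ℕ) :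
    IsClopen {y : spaceOf (L.age M) | SameQFType L (N := PointModel y.1) a b} := by
  obtain ⟨ψ, hψ, hψa⟩ := hqe.exists_isQF_realize_iff_sameQFType hM a
  convert! (isClopen_setOf_realize hψ b).preimage continuous_subtype_val using 1
  ext y
  obtain ⟨c, hc⟩ := exists_sameQFType_of_mem_spaceOf_age y.2 (α := α) b
  exact ⟨fun h => (hc ψ hψ).1 ((hψa c).2 (h.trans hc.symm)),
    fun h => ((hψa c).1 ((hc ψ hψ).2 h)).trans hc⟩

end Point

section Orbit

theorem exists_equiv_comp_eq {α A B : Type} [Finite α] [Infinite A] (hAB : Nonempty (A ≃ B))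
    {a : α → A} {b : α → B} (h : ∀ i j, a i = a j ↔ b i = b j) : ∃ g : A ≃ B, g ∘ a = b := by
  choose i hi using fun x : Set.range a => x.2
  let f : Set.range a ↪ B := ⟨b ∘ i, fun x y hxy => Subtype.ext <| by
    rw [← hi x, ← hi y]; exact (h _ _).2 hxy⟩
  obtain ⟨g, hg⟩ := Cardinal.extend_function_of_lt f
    ((Cardinal.lt_aleph0_of_finite _).trans_le (Cardinal.aleph0_le_mk A)) hAB
  exact ⟨g, funext fun j => (hg ⟨a j, j, rfl⟩).trans ((h _ _).1 (hi _))⟩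

variable {L : FirstOrder.Language.{0, 0}} [inst : L.Structure ℕ]

theorem permSMul_ofStructure_eq_true_iff {g : Equiv.Perm ℕ} {n : ℕ} {R : L.Relations n}
    {t : Fin n → ℕ} :
    permSMul g (ofStructure inst) n R t = true ↔ Structure.RelMap R (g.symm ∘ t) := by
  simp only [permSMul, ofStructure, decide_eq_true_eq]; rfl

variable [L.IsRelational]

/-- The permutation `g` as an isomorphism onto the translate by `g`. -/
def equivPointModel (g : Equiv.Perm ℕ) : ℕ ≃[L] PointModel (permSMul g (ofStructure inst)) where
  toEquiv := g
  map_fun' f := isEmptyElim f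
  map_rel' R t := permSMul_ofStructure_eq_true_iff.trans <|
    iff_of_eq (congrArg (Structure.RelMap R) (funext fun i => g.symm_apply_apply (t i)))

theorem permSMul_ofStructure_mem_spaceOf_age (g : Equiv.Perm ℕ) :
    permSMul g (ofStructure inst) ∈ spaceOf (L.age ℕ) :=
  (equivPointModel g).age_eq_age.ge

theorem eq_permSMul_ofStructure {y : StructureSpace L} (e : ℕ ≃[L] PointModel y) :
    y = permSMul e.toEquiv (ofStructure inst) := by
  funext n R t
  exact Bool.eq_iff_iff.2 ((e.symm.map_rel R t).symm.trans
    permSMul_ofStructure_eq_true_iff.symm)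

theorem exists_permSMul_eq_below (hM : L.IsUltrahomogeneous ℕ) {α : Type} [Finite α]
    {y : StructureSpace L} (hy : y ∈ spaceOf (L.age ℕ)) {a b : α → ℕ}
    (h : SameQFType L (N := PointModel y) a b) (k : ℕ) :
    ∃ g : Equiv.Perm ℕ, g ∘ a = b ∧ ∀ (n : ℕ) (R : L.Relations n) (t : Fin n → ℕ),
      (∀ i, t i < k) → permSMul g (ofStructure inst) n R t = y n R t := by
  obtain ⟨d, hd⟩ := h.exists_sumElim_of_mem_spaceOf_age hM hy (Fin.val : Fin k → ℕ)
  obtain ⟨g, hg⟩ := exists_equiv_comp_eq ⟨Equiv.refl ℕ⟩ hd.apply_eq_iff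
  refine ⟨g, congrArg (· ∘ Sum.inl) hg, fun n R t ht => Bool.eq_iff_iff.2 ?_⟩
  rw [permSMul_ofStructure_eq_true_iff]
  have hgd (i : Fin n) : g.symm (t i) = d ⟨t i, ht i⟩ :=
    g.symm_apply_eq.2 (congrFun hg (Sum.inr ⟨t i, ht i⟩)).symm
  rw [show g.symm ∘ t = fun i => d ⟨t i, ht i⟩ from funext hgd]
  exact hd.relMap_iff R fun i => Sum.inr ⟨t i, ht i⟩

theorem mem_closure_setOf_exists_equiv (hM : L.IsUltrahomogeneous ℕ) {α : Type} [Finite α]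
    (y : spaceOf (L.age ℕ)) {a b : α → ℕ} (h : SameQFType L (N := PointModel y.1) a b) :
    y ∈ closure {z : spaceOf (L.age ℕ) | ∃ e : ℕ ≃[L] PointModel z.1, e ∘ a = b} := by
  choose g hgab hgy using exists_permSMul_eq_below hM y.2 h
  refine mem_closure_of_tendsto (b := Filter.atTop)
    (f := fun k => ⟨_, permSMul_ofStructure_mem_spaceOf_age (g k)⟩)
    (tendsto_subtype_rng.2 ?_)
    (Filter.Eventually.of_forall fun k => ⟨equivPointModel (g k), hgab k⟩)
  simp only [tendsto_pi_nhds]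
  intro n R t
  obtain ⟨B, hB⟩ := (Set.finite_range t).bddAbove
  refine tendsto_const_nhds.congr' ?_
  filter_upwards [Filter.eventually_gt_atTop B] with k hk
  exact (hgy k n R t fun i => (hB ⟨i, rfl⟩).trans_lt hk).symm

theorem setOf_exists_sameQFType_mem_residual (hqe : HasQE L ℕ)
    (hM : IsAtomicSet L (Set.univ : Set ℕ)) {α : Type} [Finite α] (a b : α → ℕ) (x : ℕ) :
    {y : spaceOf (L.age ℕ) | SameQFType L (N := PointModel y.1) a b → ∃ z : ℕ,
      SameQFType L (N := PointModel y.1) (Sum.elim a fun _ : Fin 1 => x)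
        (Sum.elim b fun _ : Fin 1 => z)} ∈
      residual (spaceOf (L.age ℕ)) := by
  refine residual_of_dense_open ?_ fun y => ?_
  · simp only [imp_iff_not_or, Set.ofPred_or, Set.ofPred_exists]
    exact (isClopen_setOf_sameQFType hqe hM a b).compl.isOpen.union
      (isOpen_iUnion fun z => (isClopen_setOf_sameQFType hqe hM (Sum.elim a fun _ : Fin 1 => x)
        (Sum.elim b fun _ : Fin 1 => z)).isOpen)
  · by_cases h : SameQFType L (N := PointModel y.1) a b
    · refine closure_mono ?_
        (mem_closure_setOf_exists_equiv (isUltrahomogeneous_of_hasQE hqe hM) y h)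
      rintro z ⟨e, rfl⟩ -
      refine ⟨e x, ?_⟩
      have hcomp : Sum.elim (e ∘ a) (fun _ => e x) = e ∘ Sum.elim a fun _ : Fin 1 => x :=
        (Sum.comp_elim e a fun _ => x).symm
      exact hcomp ▸ sameQFType_comp_embedding e.toEmbedding (Sum.elim a fun _ : Fin 1 => x)
    · exact subset_closure fun h' => absurd h' h

theorem nonempty_equiv_pointModel (hM : L.IsUltrahomogeneous ℕ) {y : StructureSpace L}
    (hy : y ∈ spaceOf (L.age ℕ)) (hext : L.IsExtensionPair ℕ (PointModel y)) :
    Nonempty (ℕ ≃[L] PointModel y) := by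
  have hext' : L.IsExtensionPair (PointModel y) ℕ := by
    refine isExtensionPair_of_forall_exists_sameQFType fun n b a h x => ?_
    obtain ⟨d, hd⟩ := h.symm.exists_sumElim_of_mem_spaceOf_age hM hy fun _ : Fin 1 => x
    obtain ⟨z, rfl⟩ : ∃ z, d = fun _ => z := ⟨d 0, funext fun i => by rw [Subsingleton.elim i 0]⟩
    exact ⟨z, hd.symm⟩
  obtain ⟨a, ha⟩ := exists_sameQFType_of_mem_spaceOf_age hy (Fin.elim0 : Fin 0 → PointModel y)
  obtain ⟨f, -⟩ := ha.exists_embedding (Substructure.closure L (Set.range a))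
    (Substructure.closure_eq_of_isRelational L _).subset
  obtain ⟨e, -⟩ := equiv_between_cg Structure.cg_of_countable Structure.cg_of_countable
    ⟨⟨_, _, f.equivRange⟩, Substructure.fg_def.2 ⟨_, Set.finite_range a, rfl⟩⟩ hext hext'
  exact ⟨e⟩

theorem isGenericPoint_ofStructure (hqe : HasQE L ℕ)
    (hM : IsAtomicSet L (Set.univ : Set ℕ)) :
    IsGenericPoint (L.age ℕ) (ofStructure inst) := by
  refine ⟨permSMul_ofStructure_mem_spaceOf_age 1, ?_⟩
  have hres := eventually_countable_forall.2 fun n : ℕ => eventually_countable_forall.2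
    fun a : Fin n → ℕ => eventually_countable_forall.2 fun b : Fin n → ℕ =>
    eventually_countable_forall.2 fun x : ℕ => setOf_exists_sameQFType_mem_residual hqe hM a b x
  filter_upwards [hres] with y hy
  obtain ⟨e⟩ := nonempty_equiv_pointModel (isUltrahomogeneous_of_hasQE hqe hM) y.2
    (isExtensionPair_of_forall_exists_sameQFType fun n a b h x => hy n a b x h)
  exact ⟨_, eq_permSMul_ofStructure e⟩

end Orbit

theorem statement7_general (L : FirstOrder.Language.{0, 0}) [L.IsRelational]
    [inst : L.Structure ℕ] (hL : Countable (Σ n, L.Relations n))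
    (hcat₀ : (Cardinal.aleph0.{0}).Categorical (L.completeTheory ℕ))
    (hcat₁ : (Cardinal.aleph.{0} 1).Categorical (L.completeTheory ℕ)) (hqe : HasQE L ℕ)
    (D : Set ℕ) (hD : IsStronglyMinimal L D) (hmod : ModularGeometryOn L ℕ D) :
    IsCofinalIn (envClass L ℕ D) (finSubClass L ℕ) ∧
      JointEmbedding (envClass L ℕ D) ∧ Amalgamation (envClass L ℕ D) ∧
      (∀ A ∈ envClass L ℕ D, IsAmalgamationBase (finSubClass L ℕ) A) ∧
      IsGenericPoint (finSubClass L ℕ) (ofStructure inst) := by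
  have : Countable L.Symbols :=
    inferInstanceAs (Countable ((Σ n, L.Functions n) ⊕ Σ n, L.Relations n))
  have hatomic : IsAtomicSet L (Set.univ : Set ℕ) :=
    isAtomicSet_univ ℕ (hasFewTraces_of_categorical hcat₁ rfl) hcat₀
  have hhom : L.IsUltrahomogeneous ℕ := isUltrahomogeneous_of_hasQE hqe hatomic
  have hM : IsOligomorphic L ℕ :=
    ⟨fun _ _ => definable_orbit hhom hatomic,
      fun _ _ => finite_range_orbit hcat₀ (definable_orbit hhom hatomic)⟩
  have hcof : IsCofinalIn (envClass L ℕ D) (finSubClass L ℕ) :=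
    isCofinalIn_envClass fun _ hF => exists_finite_isEnvelope hD hM hmod hcat₁ hF
  rw [finSubClass_eq_age] at hcof ⊢
  exact ⟨hcof, hcof.jointEmbedding (age.jointEmbedding ℕ), hcof.amalgamation hhom.amalgamation_age,
    fun _ hA => isAmalgamationBase_of_amalgamation hhom.amalgamation_age (hcof.1 hA),
    isGenericPoint_ofStructure hqe hatomic⟩

/-- For a totally categorical structure `M` (in a regular adequate language with
quantifier elimination) with `0`-definable modular strictly minimal set `D`, the family
of finite `D`-envelopes is cofinal in the class of finite substructures of `M`, has JEP
and AP, consists of amalgamation bases, and `M` is the corresponding generic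
structure. -/
theorem statement7 (L : FirstOrder.Language.{0, 0}) [L.IsRelational]
    [inst : L.Structure ℕ] (hL : Countable (Σ n, L.Relations n))
    (htc : TotallyCategorical L ℕ) (hqe : HasQE L ℕ)
    (D : Set ℕ) (hmin : StrictlyMinimalSet L ℕ D) (hmod : ModularGeometryOn L ℕ D) :
    IsCofinalIn (envClass L ℕ D) (finSubClass L ℕ) ∧
      JointEmbedding (envClass L ℕ D) ∧ Amalgamation (envClass L ℕ D) ∧
      (∀ A ∈ envClass L ℕ D, IsAmalgamationBase (finSubClass L ℕ) A) ∧
      IsGenericPoint (finSubClass L ℕ) (ofStructure inst) :=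
  statement7_general L hL (htc _ le_rfl) (htc _ (Cardinal.aleph0_le_aleph 1)) hqe D
    ⟨hmin.1, hmin.2.1⟩ hmod

end Paper
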